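/- arXiv:2203.10330 — 14 statements merged into one kernel-verified Lean document; each statement's English description precedes it below -/
import Mathlib

section
/- For every sufficiently large n, every n×n binary matrix in which every row has at least 9 ones contains a nonempty set S of at most 0.49·n columns such that in the submatrix formed by the columns of S, every row has at least two ones. -/
open Finset in
lemma aux_w {n : ℕ} (U V : Finset (Fin n)) (h : Disjoint U V) :
    ∑ S : Finset (Fin n), ((2/5:ℝ)^S.card * (3/5:ℝ)^(Sᶜ).card) *
      (if U ⊆ S ∧ Disjoint V S then 1 else 0) = (2/5)^U.card * (3/5)^V.card := by
  have key := Finset.prod_add (fun j => if j ∈ V then (0:ℝ) else 2/5)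
    (fun j => if j ∈ U then (0:ℝ) else 3/5) (univ : Finset (Fin n))
  rw [Finset.powerset_univ] at key
  have e1 : ∀ S : Finset (Fin n), (∏ j ∈ S, if j ∈ V then (0:ℝ) else 2/5) *
      (∏ j ∈ univ \ S, if j ∈ U then (0:ℝ) else 3/5) =
      ((2/5:ℝ)^S.card * (3/5:ℝ)^(Sᶜ).card) *
      (if U ⊆ S ∧ Disjoint V S then 1 else 0) := by
    intro S
    split_ifs with hc
    · have p1 : (∏ j ∈ S, if j ∈ V then (0:ℝ) else 2/5) = (2/5)^S.card := by
        rw [← prod_const]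
        refine prod_congr rfl fun j hj => ?_
        have : j ∉ V := fun hu => (disjoint_left.1 hc.2 hu hj)
        simp [this]
      have p2 : (∏ j ∈ univ \ S, if j ∈ U then (0:ℝ) else 3/5) = (3/5)^(Sᶜ).card := by
        rw [compl_eq_univ_sdiff, ← prod_const]
        refine prod_congr rfl fun j hj => ?_
        have : j ∉ U := fun hu => (mem_sdiff.1 hj).2 (hc.1 hu)
        simp [this]
      rw [p1, p2, mul_one]
    · rw [not_and_or] at hc
      rw [mul_zero]
      rcases hc with hc | hc
      · obtain ⟨j, hj, hjs⟩ := not_subset.1 hc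
        apply mul_eq_zero_of_right
        exact prod_eq_zero (i := j) (by simp [hjs]) (by simp [hj])
      · obtain ⟨j, hj, hjs⟩ := not_disjoint_iff.1 hc
        apply mul_eq_zero_of_left
        exact prod_eq_zero hjs (by simp [hj])
  rw [← sum_congr rfl (fun S _ => e1 S), ← key]
  have e2 : ∀ j : Fin n, ((if j ∈ V then (0:ℝ) else 2/5) + (if j ∈ U then (0:ℝ) else 3/5)) =
      (if j ∈ U then (2/5:ℝ) else 1) * (if j ∈ V then (3/5:ℝ) else 1) := by
    intro j
    by_cases hu : j ∈ U
    · have := disjoint_left.1 h hu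
      simp [hu, this]
    · by_cases hv : j ∈ V <;> simp [hu, hv]; norm_num
  rw [prod_congr rfl (fun j _ => e2 j), prod_mul_distrib]
  simp [prod_ite_mem, div_pow]

open Finset in
lemma aux_main {n : ℕ} (R : Fin n → Finset (Fin n)) (hR : ∀ i, (R i).card = 9) :
    ∃ S : Finset (Fin n), (S.card : ℝ) + ∑ i, ((2 - (R i ∩ S).card : ℕ) : ℝ) ≤ 0.49 * n := by
  set w : Finset (Fin n) → ℝ := fun S => (2/5:ℝ)^S.card * (3/5:ℝ)^(Sᶜ).card with hw
  have hwp : ∀ S, 0 < w S := fun S => by positivity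
  have hw1 : ∑ S, w S = 1 := by
    have := aux_w (∅ : Finset (Fin n)) ∅ (by simp)
    simpa using this
  have hc : ∀ S : Finset (Fin n), (S.card : ℝ) =
      ∑ j, (if ({j} : Finset (Fin n)) ⊆ S ∧ Disjoint ∅ S then (1:ℝ) else 0) := by
    intro S; simp
  have hg : ∀ (i : Fin n) (S : Finset (Fin n)), ((2 - (R i ∩ S).card : ℕ) : ℝ) ≤
      2 * (if ∅ ⊆ S ∧ Disjoint (R i) S then (1:ℝ) else 0) +
      ∑ r ∈ R i, (if {r} ⊆ S ∧ Disjoint ((R i).erase r) S then (1:ℝ) else 0) := by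
    intro i S
    have hn : ∀ r ∈ R i, (0:ℝ) ≤ (if {r} ⊆ S ∧ Disjoint ((R i).erase r) S then (1:ℝ) else 0) := by
      intro r _; split_ifs <;> norm_num
    have hs := sum_nonneg hn
    rcases Nat.lt_or_ge (R i ∩ S).card 2 with h | h
    · interval_cases hk : (R i ∩ S).card
      · have : Disjoint (R i) S := by
          rw [disjoint_iff_inter_eq_empty]; exact card_eq_zero.1 hk
        simp only [empty_subset, this, and_self, if_true]
        push_cast; linarith
      · obtain ⟨r, hr⟩ := card_eq_one.1 hk
        have hrm : r ∈ R i ∩ S := by simp [hr]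
        rw [mem_inter] at hrm
        have hle := single_le_sum hn hrm.1
        have hd : Disjoint ((R i).erase r) S := by
          rw [disjoint_left]
          intro x hx hxs
          rw [mem_erase] at hx
          have : x ∈ R i ∩ S := mem_inter.2 ⟨hx.2, hxs⟩
          rw [hr, mem_singleton] at this
          exact hx.1 this
        rw [if_pos ⟨by simpa using hrm.2, hd⟩] at hle
        have : (0:ℝ) ≤ 2 * (if ∅ ⊆ S ∧ Disjoint (R i) S then (1:ℝ) else 0) := by
          split_ifs <;> norm_num
        have e : ((2 - 1 : ℕ) : ℝ) = 1 := by norm_num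
        rw [e]
        linarith
    · rw [Nat.sub_eq_zero_of_le h]
      have : (0:ℝ) ≤ 2 * (if ∅ ⊆ S ∧ Disjoint (R i) S then (1:ℝ) else 0) := by
        split_ifs <;> norm_num
      push_cast
      linarith
  have E1 : ∑ S, w S * (S.card : ℝ) = 2/5 * n := by
    simp_rw [hc, mul_sum]
    rw [sum_comm]
    rw [sum_congr rfl (fun j _ => aux_w {j} ∅ (by simp))]
    simp; ring
  have E2 : ∀ i, ∑ S, w S * ((2 - (R i ∩ S).card : ℕ) : ℝ) ≤
      2 * (3/5)^9 + 9 * ((2/5) * (3/5)^8) := by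
    intro i
    calc _ ≤ ∑ S, w S * (2 * (if ∅ ⊆ S ∧ Disjoint (R i) S then (1:ℝ) else 0) +
      ∑ r ∈ R i, (if {r} ⊆ S ∧ Disjoint ((R i).erase r) S then (1:ℝ) else 0)) :=
          sum_le_sum fun S _ => mul_le_mul_of_nonneg_left (hg i S) (hwp S).le
      _ = _ := by
        simp_rw [mul_add, sum_add_distrib, mul_sum]
        congr 1
        · have := aux_w ∅ (R i) (by simp)
          rw [hR] at this
          simp_rw [mul_left_comm _ (2:ℝ)]
          rw [← mul_sum, this]; simp
        · rw [sum_comm]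
          rw [sum_congr rfl (fun r _ => aux_w {r} ((R i).erase r) (by simp))]
          rw [sum_congr rfl (g := fun _ => (2/5:ℝ) * (3/5)^8)]
          · simp [hR]
          · intro r hr
            rw [card_erase_of_mem hr, hR]; simp
  have tot : ∑ S, w S * ((S.card : ℝ) + ∑ i, ((2 - (R i ∩ S).card : ℕ) : ℝ)) ≤
      ∑ S, w S * (0.49 * n) := by
    rw [← sum_mul, hw1]
    simp_rw [mul_add, sum_add_distrib, E1, mul_sum]
    rw [sum_comm]
    have := sum_le_sum (s := univ) fun i _ => E2 i
    simp only [sum_const, card_univ, Fintype.card_fin, nsmul_eq_mul] at this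
    have hn : (0:ℝ) ≤ n := by positivity
    norm_num at this ⊢
    linarith
  obtain ⟨S, -, hS⟩ := exists_le_of_sum_le ⟨∅, mem_univ _⟩ tot
  exact ⟨S, le_of_mul_le_mul_left hS (hwp S)⟩

/-- For every sufficiently large `n`, every `n × n` binary matrix in which every row has
at least 9 ones contains a nonempty set `S` of at most `0.49 * n` columns such that in the
submatrix formed by the columns of `S`, every row has at least two ones. -/
theorem stmt_0 :
    ∃ N : ℕ, ∀ n : ℕ, N ≤ n →
      ∀ A : Fin n → Fin n → ℕ,
        (∀ i j, A i j ≤ 1) →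
        (∀ i, 9 ≤ ∑ j, A i j) →
        ∃ S : Finset (Fin n), S.Nonempty ∧ (S.card : ℝ) ≤ 0.49 * n ∧
          ∀ i, 2 ≤ ∑ j ∈ S, A i j := by
  refine ⟨1, fun n hn A hA h9 => ?_⟩
  have hex : ∀ i, ∃ R : Finset (Fin n), R.card = 9 ∧ ∀ j ∈ R, A i j = 1 := by
    intro i
    have h1 : ∑ j, A i j = (Finset.univ.filter (fun j => A i j = 1)).card := by
      rw [Finset.card_filter]
      refine Finset.sum_congr rfl fun j _ => ?_
      have := hA i j
      split_ifs <;> omega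
    obtain ⟨R, hR, hc⟩ := Finset.exists_subset_card_eq (h1 ▸ h9 i)
    exact ⟨R, hc, fun j hj => (Finset.mem_filter.1 (hR hj)).2⟩
  choose R hR hR1 using hex
  obtain ⟨S, hS⟩ := aux_main R hR
  have hT : ∀ i, ∃ T : Finset (Fin n), T ⊆ R i \ S ∧ T.card = 2 - (R i ∩ S).card := by
    intro i
    apply Finset.exists_subset_card_eq
    have := Finset.card_sdiff_add_card_inter (R i) S
    have := hR i
    omega
  choose T hT hTc using hT
  have h2 : ∀ i, 2 ≤ ∑ j ∈ S ∪ Finset.univ.biUnion T, A i j := by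
    intro i
    have hd : Disjoint (R i ∩ S) (T i) := by
      rw [Finset.disjoint_left]
      intro x hx hx'
      exact (Finset.mem_sdiff.1 (hT i hx')).2 (Finset.mem_inter.1 hx).2
    have hsub : (R i ∩ S) ∪ T i ⊆ S ∪ Finset.univ.biUnion T :=
      Finset.union_subset_union Finset.inter_subset_right
        (Finset.subset_biUnion_of_mem T (Finset.mem_univ i))
    have hle := Finset.sum_le_sum_of_subset (f := A i) hsub
    have hone : ∑ j ∈ (R i ∩ S) ∪ T i, A i j = ((R i ∩ S) ∪ T i).card := by
      rw [Finset.card_eq_sum_ones]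
      refine Finset.sum_congr rfl fun j hj => hR1 i j ?_
      rcases Finset.mem_union.1 hj with h | h
      · exact (Finset.mem_inter.1 h).1
      · exact (Finset.mem_sdiff.1 (hT i h)).1
    rw [Finset.card_union_of_disjoint hd, hTc] at hone
    omega
  refine ⟨S ∪ Finset.univ.biUnion T, ?_, ?_, h2⟩
  · by_contra hne
    rw [Finset.not_nonempty_iff_eq_empty] at hne
    have := h2 ⟨0, hn⟩
    rw [hne] at this
    simp at this
  · refine le_trans ?_ hS
    have a := Finset.card_union_le S (Finset.univ.biUnion T)
    have b := Finset.card_biUnion_le (s := Finset.univ) (t := T)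
    simp_rw [hTc] at b
    exact_mod_cast a.trans (Nat.add_le_add_left b _)
end

section
/- Let n ≥ 5 and let A be the n×n binary matrix whose rows are the n cyclic rotations of the vector (1,1,1,1,0,…,0) of length n. Then every nonempty 1-free set of columns of A has cardinality at least n/2. Equivalently, for every nonzero x ∈ {0,1}^n, if the integer vector Ax has no coordinate equal to 1, then x has at least n/2 coordinates equal to 1. -/
theorem aux_col (n : ℕ) (hn : 5 ≤ n) (j : Fin n) :
    ∑ i : Fin n, (if ((j : ℕ) + n - (i : ℕ)) % n < 4 then 1 else 0) = 4 := by
  have : NeZero n := ⟨by omega⟩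
  have h1 : ∀ i : Fin n, (if ((j : ℕ) + n - (i : ℕ)) % n < 4 then 1 else 0)
      = (fun i : Fin n => if (i : ℕ) < 4 then 1 else 0) (Equiv.subLeft j i) := by
    intro i
    have : ((j - i : Fin n) : ℕ) = ((j : ℕ) + n - (i : ℕ)) % n := by
      rw [Fin.sub_def]
      show (n - (i : ℕ) + j) % n = _
      congr 1
      have := i.2
      omega
    simp only [Equiv.subLeft_apply, this]
  rw [Finset.sum_congr rfl (fun i _ => h1 i),
    Equiv.sum_comp (Equiv.subLeft j) (fun i : Fin n => if (i : ℕ) < 4 then 1 else 0),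
    Fin.sum_univ_eq_sum_range (fun i : ℕ => if i < 4 then 1 else 0) n]
  rw [← Finset.sum_filter]
  have : (Finset.range n).filter (fun i => i < 4) = Finset.range 4 := by
    ext a
    simp only [Finset.mem_filter, Finset.mem_range]
    omega
  rw [this]
  simp

theorem aux_mod (n a i : ℕ) (hi : i < n) (ha : a < n) :
    (a + n - i) % n = if i ≤ a then a - i else a + n - i := by
  split_ifs with h
  · rw [show a + n - i = (a - i) + n by omega, Nat.add_mod_right, Nat.mod_eq_of_lt (by omega)]
  · rw [Nat.mod_eq_of_lt (by omega)]

/-- Let `n ≥ 5` and let `A` be the `n × n` binary matrix whose rows are the `n` cyclic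
rotations of the vector `(1,1,1,1,0,…,0)`: row `i` has its 1-entries in columns
`i, i+1, i+2, i+3 (mod n)`.  Then every nonempty 1-free set of columns of `A` has
cardinality at least `n / 2`. -/
theorem stmt_1 (n : ℕ) (hn : 5 ≤ n) (A : Fin n → Fin n → ℕ)
    (hA : ∀ i j : Fin n, A i j = if ((j : ℕ) + n - (i : ℕ)) % n < 4 then 1 else 0)
    (S : Finset (Fin n)) (hS : S.Nonempty)
    (hfree : ∀ i, ∑ j ∈ S, A i j ≠ 1) :
    n ≤ 2 * S.card := by
  have hpos : 0 < n := by omega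
  have hstep : ∀ i i' : Fin n, (i' : ℕ) = (if (i : ℕ) + 1 = n then 0 else (i : ℕ) + 1) →
      ∑ j ∈ S, A i j = 0 → ∑ j ∈ S, A i' j = 0 := by
    intro i i' hi h0
    have hle : ∑ j ∈ S, A i' j ≤ 1 := by
      let c : Fin n := ⟨if (i : ℕ) + 4 < n then i + 4 else i + 4 - n, by
        have := i.2
        split_ifs <;> omega⟩
      have hc : (c : ℕ) = if (i : ℕ) + 4 < n then (i : ℕ) + 4 else i + 4 - n := rfl
      calc ∑ j ∈ S, A i' j ≤ ∑ j ∈ S, (A i j + if j = c then 1 else 0) := by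
            apply Finset.sum_le_sum
            intro j _
            rw [hA, hA, aux_mod n j i i.2 j.2, aux_mod n j i' i'.2 j.2]
            have h1 := i.2
            have h2 := j.2
            have h3 := i'.2
            simp only [Fin.ext_iff, hc]
            split_ifs at * <;> omega
        _ ≤ 1 := by
            rw [Finset.sum_add_distrib, h0, Finset.sum_ite_eq']
            split_ifs <;> simp
    have := hfree i'
    omega
  have hne : ∀ i, ∑ j ∈ S, A i j ≠ 0 := by
    intro i h0
    have hall : ∀ k : ℕ, ∑ j ∈ S, A ⟨(i + k) % n, Nat.mod_lt _ hpos⟩ j = 0 := by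
      intro k
      induction k with
      | zero =>
        convert h0 using 3
        exact Fin.ext (by simp [Nat.mod_eq_of_lt i.2])
      | succ k ih =>
        refine hstep _ _ ?_ ih
        show ((i : ℕ) + (k + 1)) % n = if ((i : ℕ) + k) % n + 1 = n then 0 else ((i : ℕ) + k) % n + 1
        rw [← add_assoc, Nat.add_mod, Nat.mod_eq_of_lt (show 1 < n by omega)]
        have := Nat.mod_lt ((i : ℕ) + k) hpos
        split_ifs with h
        · rw [h, Nat.mod_self]
        · rw [Nat.mod_eq_of_lt (by omega)]
    obtain ⟨j, hj⟩ := hS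
    have h := hall (j + n - i)
    have hij : (⟨((i : ℕ) + (j + n - i)) % n, Nat.mod_lt _ hpos⟩ : Fin n) = j := by
      apply Fin.ext
      show ((i : ℕ) + (j + n - i)) % n = j
      have := i.2
      rw [show (i : ℕ) + (j + n - i) = j + n by omega, Nat.add_mod_right, Nat.mod_eq_of_lt j.2]
    rw [hij, Finset.sum_eq_zero_iff] at h
    have := h j hj
    rw [hA, aux_mod n j j j.2 j.2] at this
    simp at this
  have h4 : ∑ i, ∑ j ∈ S, A i j = 4 * S.card := by
    rw [Finset.sum_comm]
    simp only [hA, aux_col n hn]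
    simp [mul_comm]
  have h2 : ∑ i : Fin n, 2 ≤ ∑ i, ∑ j ∈ S, A i j := by
    apply Finset.sum_le_sum
    intro i _
    have := hne i
    have := hfree i
    omega
  rw [h4] at h2
  simp at h2
  omega
end

section
/- For all positive integers n and k, every binary n×(n+k) matrix of the form A = [I_n | B], where I_n is the n×n identity matrix and B is a binary n×k matrix, has a nonempty 1-free set of at most n/H_k + k columns, where H_k = Σ_{ℓ=1}^{k} 1/ℓ is the k-th harmonic number. -/
noncomputable def wt (k t : ℕ) : ℝ := ((t-1).factorial : ℝ) * ((k-t).factorial : ℝ) / (k.factorial : ℝ)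

theorem wt_pos (k t : ℕ) : 0 < wt k t := by
  unfold wt; positivity

theorem wt_add (k t : ℕ) (ht : 1 ≤ t) (hk : t ≤ k) :
    wt (k+1) t + wt (k+1) (t+1) = wt k t := by
  obtain ⟨a, rfl⟩ := Nat.exists_eq_add_of_le' ht
  obtain ⟨b, rfl⟩ := Nat.exists_eq_add_of_le hk
  unfold wt
  have h1 : a + 1 + b + 1 - (a+1) = b + 1 := by omega
  have h2 : a + 1 + b + 1 - (a+1+1) = b := by omega
  have h3 : a + 1 + b - (a+1) = b := by omega
  rw [h1, h2, h3]
  simp only [Nat.add_sub_cancel]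
  rw [Nat.factorial_succ (a+1+b), Nat.factorial_succ b, Nat.factorial_succ a]
  have : ((a+1+b).factorial : ℝ) ≠ 0 := by positivity
  push_cast
  field_simp
  ring

theorem wt_sum {α : Type*} [DecidableEq α] (V : Finset α) : ∀ (m a : ℕ), 1 ≤ a → a ≤ m →
    ∑ U ∈ V.powerset, wt (m + V.card) (U.card + a) = wt m a := by
  induction V using Finset.induction_on with
  | empty => intro m a _ _; simp
  | insert x V hx ih =>
    intro m a ha hm
    rw [Finset.sum_powerset_insert hx, Finset.card_insert_of_notMem hx]
    have e : ∑ t ∈ V.powerset, wt (m + (V.card+1)) ((insert x t).card + a)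
        = ∑ t ∈ V.powerset, wt ((m+1) + V.card) (t.card + (a+1)) := by
      apply Finset.sum_congr rfl
      intro t ht
      have : x ∉ t := fun h => hx (Finset.mem_powerset.1 ht h)
      rw [Finset.card_insert_of_notMem this]
      congr 1 <;> omega
    have e2 : m + (V.card + 1) = (m+1) + V.card := by omega
    rw [e, e2, ih (m+1) a ha (by omega), ih (m+1) (a+1) (by omega) (by omega), wt_add m a ha hm]

theorem wt_fiber {k : ℕ} (R : Finset (Fin k)) (j : Fin k) (hj : j ∈ R) :
    ∑ T ∈ (Finset.univ : Finset (Finset (Fin k))) with R ∩ T = {j}, wt k T.card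
      = 1 / (R.card : ℝ) := by
  have hR : 1 ≤ R.card := Finset.card_pos.2 ⟨j, hj⟩
  have hc : R.card + Rᶜ.card = k := by rw [Finset.card_add_card_compl, Fintype.card_fin]
  have h := wt_sum Rᶜ R.card 1 le_rfl hR
  rw [hc] at h
  have h1 : wt R.card 1 = 1 / (R.card : ℝ) := by
    obtain ⟨r, hr⟩ := Nat.exists_eq_add_of_le' hR
    rw [hr]; unfold wt
    simp only [Nat.add_sub_cancel]
    rw [Nat.factorial_succ r]
    have : (r.factorial : ℝ) ≠ 0 := by positivity
    push_cast
    simp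
    field_simp
  rw [← h1, ← h]
  symm
  refine Finset.sum_nbij' (fun U => insert j U) (fun T => T \ R) ?_ ?_ ?_ ?_ ?_
  · intro U hU
    simp only [Finset.mem_filter, Finset.mem_univ, true_and]
    have hU' := Finset.mem_powerset.1 hU
    ext x
    have := @hU' x
    simp only [Finset.mem_compl] at this
    simp only [Finset.mem_inter, Finset.mem_insert, Finset.mem_singleton]
    grind
  · intro T hT
    rw [Finset.mem_powerset]
    intro x hx
    simp at hx ⊢
    exact hx.2
  · intro U hU
    have hU' := Finset.mem_powerset.1 hU
    ext x
    have := @hU' x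
    simp only [Finset.mem_compl] at this
    simp only [Finset.mem_sdiff, Finset.mem_insert]
    grind
  · intro T hT
    simp only [Finset.mem_filter, Finset.mem_univ, true_and] at hT
    ext x
    have := Finset.ext_iff.1 hT x
    have := Finset.ext_iff.1 hT j
    simp only [Finset.mem_inter, Finset.mem_singleton] at *
    simp only [Finset.mem_sdiff, Finset.mem_insert]
    grind
  · intro U hU
    have hU' := Finset.mem_powerset.1 hU
    have : j ∉ U := fun h => by simpa [hj] using hU' h
    rw [Finset.card_insert_of_notMem this]

theorem wt_row {k : ℕ} (R : Finset (Fin k)) :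
    ∑ T ∈ (Finset.univ : Finset (Finset (Fin k))) with (R ∩ T).card = 1, wt k T.card ≤ 1 := by
  have hs : (Finset.univ : Finset (Finset (Fin k))).filter (fun T => (R ∩ T).card = 1)
      ⊆ R.biUnion (fun j => (Finset.univ : Finset (Finset (Fin k))).filter (fun T => R ∩ T = {j})) := by
    intro T hT
    simp only [Finset.mem_filter, Finset.mem_univ, true_and] at hT
    obtain ⟨j, hj⟩ := Finset.card_eq_one.1 hT
    have : j ∈ R ∩ T := by rw [hj]; simp
    simp only [Finset.mem_biUnion, Finset.mem_filter, Finset.mem_univ, true_and]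
    exact ⟨j, (Finset.mem_inter.1 this).1, hj⟩
  calc _ ≤ _ := Finset.sum_le_sum_of_subset_of_nonneg hs (fun _ _ _ => (wt_pos _ _).le)
    _ = ∑ j ∈ R, ∑ T ∈ (Finset.univ : Finset (Finset (Fin k))) with R ∩ T = {j}, wt k T.card := by
        apply Finset.sum_biUnion
        intro a _ b _ hab
        simp only [Function.onFun]
        rw [Finset.disjoint_left]
        intro T h1 h2
        simp only [Finset.mem_filter, Finset.mem_univ, true_and] at h1 h2
        rw [h1] at h2
        exact hab (Finset.singleton_injective h2)
    _ = ∑ j ∈ R, 1 / (R.card : ℝ) := Finset.sum_congr rfl (fun j hj => wt_fiber R j hj)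
    _ ≤ 1 := by
        rw [Finset.sum_const, nsmul_eq_mul, mul_one_div]
        exact div_self_le_one _

theorem wt_total (k : ℕ) :
    ∑ T ∈ (Finset.univ : Finset (Finset (Fin k))) with T.Nonempty, wt k T.card
      = ∑ l ∈ Finset.Icc 1 k, (1 : ℝ) / l := by
  have h := Finset.sum_powerset_apply_card (fun t => if t = 0 then (0:ℝ) else wt k t) (x :=
    (Finset.univ : Finset (Fin k)))
  rw [Finset.sum_filter]
  rw [Finset.powerset_univ] at h
  simp only [Finset.card_univ, Fintype.card_fin, Finset.card_eq_zero] at h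
  have e : ∀ T : Finset (Fin k), (if T.Nonempty then wt k T.card else 0)
      = if T = ∅ then 0 else wt k T.card := by
    intro T
    by_cases hT : T = ∅
    · simp [hT]
    · simp [hT, Finset.nonempty_iff_ne_empty]
  simp only [e]
  rw [h, Finset.sum_range_succ', Finset.range_eq_Ico, Finset.sum_Ico_add' (fun t => k.choose t • (if t = 0 then (0:ℝ) else wt k t)) 0 k 1]
  simp only [if_true, smul_zero, add_zero, zero_add]
  have : Finset.Ico 1 (k+1) = Finset.Icc 1 k := by ext; simp
  rw [this]
  apply Finset.sum_congr rfl
  intro t ht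
  rw [Finset.mem_Icc] at ht
  obtain ⟨s, rfl⟩ := Nat.exists_eq_add_of_le' ht.1
  have hc := Nat.choose_mul_factorial_mul_factorial ht.2
  have hc' : (k.choose (s+1) : ℝ) * ((s+1).factorial : ℝ) * ((k-(s+1)).factorial : ℝ) = (k.factorial : ℝ) := by
    exact_mod_cast hc
  have : (k.factorial : ℝ) ≠ 0 := by positivity
  simp only [Nat.add_eq_zero_iff, one_ne_zero, and_false, if_false, nsmul_eq_mul]
  unfold wt
  rw [Nat.factorial_succ] at hc'
  push_cast at hc' ⊢
  have : (s : ℝ) + 1 ≠ 0 := by positivity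
  field_simp
  rw [← hc']
  ring


/-- For all positive integers `n` and `k`, every binary `n × (n+k)` matrix of the form
`A = [Iₙ | B]` (columns indexed by `Fin n ⊕ Fin k`, with the first `n` columns forming the
identity matrix) has a nonempty 1-free set of at most `n / H_k + k` columns, where
`H_k = ∑_{ℓ=1}^k 1/ℓ` is the `k`-th harmonic number. -/
theorem stmt_2 (n k : ℕ) (hn : 0 < n) (hk : 0 < k)
    (B : Fin n → Fin k → ℕ) (hB : ∀ i j, B i j ≤ 1)
    (A : Fin n → Fin n ⊕ Fin k → ℕ)
    (hA : ∀ i c, A i c =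
      Sum.elim (fun j : Fin n => if i = j then (1 : ℕ) else 0) (fun j : Fin k => B i j) c) :
    ∃ S : Finset (Fin n ⊕ Fin k), S.Nonempty ∧
      (∀ i, ∑ c ∈ S, A i c ≠ 1) ∧
      (S.card : ℝ) ≤ (n : ℝ) / (∑ l ∈ Finset.Icc 1 k, (1 : ℝ) / l) + k := by
  classical
  set H : ℝ := ∑ l ∈ Finset.Icc 1 k, (1 : ℝ) / l with hH
  have hHpos : 0 < H := by
    apply Finset.sum_pos
    · intro l hl
      have : 0 < l := (Finset.mem_Icc.1 hl).1
      positivity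
    · exact ⟨1, by simp; omega⟩
  let R : Fin n → Finset (Fin k) := fun i => Finset.univ.filter (fun j => B i j = 1)
  let Q : Finset (Fin k) → Finset (Fin n) := fun T => Finset.univ.filter (fun i => (R i ∩ T).card = 1)
  have key : ∃ T : Finset (Fin k), T.Nonempty ∧ ((Q T).card : ℝ) ≤ n / H := by
    by_contra! hcon
    have h1 : ∑ T ∈ (Finset.univ : Finset (Finset (Fin k))) with T.Nonempty, wt k T.card * ((n:ℝ) / H)
        < ∑ T ∈ (Finset.univ : Finset (Finset (Fin k))) with T.Nonempty, wt k T.card * ((Q T).card : ℝ) := by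
      apply Finset.sum_lt_sum_of_nonempty
      · refine ⟨{⟨0, hk⟩}, ?_⟩
        simp
      · intro T hT
        exact mul_lt_mul_of_pos_left (hcon T (Finset.mem_filter.1 hT).2) (wt_pos _ _)
    rw [← Finset.sum_mul, wt_total, ← hH, mul_div_cancel₀ _ hHpos.ne'] at h1
    have h2 : ∑ T ∈ (Finset.univ : Finset (Finset (Fin k))) with T.Nonempty, wt k T.card * ((Q T).card : ℝ)
        ≤ ∑ T : Finset (Fin k), wt k T.card * ((Q T).card : ℝ) :=
      Finset.sum_le_sum_of_subset_of_nonneg (Finset.filter_subset _ _)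
        (fun T _ _ => mul_nonneg (wt_pos _ _).le (Nat.cast_nonneg _))
    have h3 : ∑ T : Finset (Fin k), wt k T.card * ((Q T).card : ℝ)
        = ∑ i : Fin n, ∑ T ∈ (Finset.univ : Finset (Finset (Fin k))) with (R i ∩ T).card = 1, wt k T.card := by
      simp only [Finset.sum_filter]
      rw [Finset.sum_comm]
      apply Finset.sum_congr rfl
      intro T _
      rw [← Finset.sum_filter, Finset.sum_const, nsmul_eq_mul, mul_comm]
    have h4 : ∑ i : Fin n, ∑ T ∈ (Finset.univ : Finset (Finset (Fin k))) with (R i ∩ T).card = 1, wt k T.card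
        ≤ ∑ i : Fin n, (1:ℝ) := Finset.sum_le_sum (fun i _ => wt_row (R i))
    simp at h4
    linarith
  obtain ⟨T, hT, hle⟩ := key
  refine ⟨(Q T).disjSum T, ?_, ?_, ?_⟩
  · obtain ⟨t, ht⟩ := hT
    exact ⟨Sum.inr t, by simpa using ht⟩
  · intro i
    rw [Finset.sum_disjSum]
    simp only [hA, Sum.elim_inl, Sum.elim_inr]
    have e : ∑ j ∈ T, B i j = (R i ∩ T).card := by
      rw [Finset.inter_comm, Finset.card_eq_sum_ones, ← Finset.filter_mem_eq_inter, Finset.sum_filter]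
      apply Finset.sum_congr rfl
      intro j _
      have := hB i j
      simp only [R, Finset.mem_filter, Finset.mem_univ, true_and]
      split_ifs <;> omega
    rw [e, Finset.sum_ite_eq]
    simp only [Q, Finset.mem_filter, Finset.mem_univ, true_and]
    split_ifs <;> omega
  · rw [Finset.card_disjSum]
    have : T.card ≤ k := by simpa using Finset.card_le_univ T
    have : (T.card : ℝ) ≤ k := by exact_mod_cast this
    push_cast
    linarith
end

section
/- For all integers k and j with 1 ≤ j ≤ k, the identity Σ_{i=1}^{k} j·C(k−j, i−1)/C(k−1, i−1) = k holds in the rational numbers, where C(a,b) denotes the binomial coefficient (with C(a,b) = 0 when b > a). -/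
lemma aux_succ (n t : ℕ) : ((n.choose (t+1) : ℕ) : ℚ) * (t+1) = (n.choose t : ℚ) * ((n:ℚ) - t) := by
  rcases le_or_gt t n with h | h
  · have := Nat.choose_succ_right_eq n t
    rw [← Nat.cast_sub h]
    exact_mod_cast this
  · rw [Nat.choose_eq_zero_of_lt h, Nat.choose_eq_zero_of_lt (by omega)]
    simp

lemma aux_step (n m t : ℕ) (hm : m ≤ n) (ht : t ≤ n) :
    ((n:ℚ) - t) * ((m.choose (t+1) : ℚ) / (n.choose (t+1) : ℚ))
      = ((m:ℚ) - t) * ((m.choose t : ℚ) / (n.choose t : ℚ)) := by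
  rcases ht.lt_or_eq with h | rfl
  · have h1 : (n.choose t : ℚ) ≠ 0 := by exact_mod_cast (Nat.choose_pos ht).ne'
    have h2 : (n.choose (t+1) : ℚ) ≠ 0 := by exact_mod_cast (Nat.choose_pos h).ne'
    have h3 : (t:ℚ) + 1 ≠ 0 := by positivity
    have e1 := aux_succ n t
    have e2 := aux_succ m t
    rw [← mul_div_assoc, ← mul_div_assoc, div_eq_div_iff h2 h1]
    apply mul_right_cancel₀ h3
    linear_combination ((n:ℚ) - t) * (n.choose t : ℚ) * e2 - ((m:ℚ) - t) * (m.choose t : ℚ) * e1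
  · rcases hm.lt_or_eq with h | rfl
    · rw [Nat.choose_eq_zero_of_lt h]; simp
    · simp

lemma aux_sum (n m : ℕ) (hm : m ≤ n) (T : ℕ) (hT : T ≤ n + 1) :
    ∑ t ∈ Finset.range T, ((n:ℚ) + 1 - m) * (m.choose t : ℚ) / (n.choose t : ℚ)
      = n + 1 - ((n:ℚ) + 1 - T) * ((m.choose T : ℚ) / (n.choose T : ℚ)) := by
  induction T with
  | zero => simp
  | succ t ih =>
    rw [Finset.sum_range_succ, ih (by omega), mul_div_assoc]
    have := aux_step n m t hm (by omega)
    push_cast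
    linear_combination this

/-- For all integers `k, j` with `1 ≤ j ≤ k`,
`∑_{i=1}^k j * C(k-j, i-1) / C(k-1, i-1) = k` holds in the rational numbers. -/
theorem stmt_4 (k j : ℕ) (hj : 1 ≤ j) (hjk : j ≤ k) :
    ∑ i ∈ Finset.Icc 1 k,
      (j : ℚ) * ((k - j).choose (i - 1) : ℚ) / ((k - 1).choose (i - 1) : ℚ) = k := by
  obtain ⟨n, rfl⟩ : ∃ n, k = n + 1 := ⟨k - 1, by omega⟩
  have h := aux_sum n (n + 1 - j) (by omega) (n + 1) le_rfl
  rw [Nat.cast_sub hjk] at h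
  push_cast at h
  simp only [sub_sub_cancel, sub_self, zero_mul, sub_zero] at h
  rw [← Finset.Ico_add_one_right_eq_Icc, Finset.sum_Ico_eq_sum_range]
  push_cast
  simpa using h
end

section
/- For all positive integers m and k, every binary m×(m+k) matrix has a nonempty even set of at most (1 + 1/(2^k − 1))·(m+k)/2 columns. -/
theorem aux_card (m k : ℕ) (L : (Fin (m+k) → ZMod 2) →ₗ[ZMod 2] (Fin m → ZMod 2))
    [Fintype (LinearMap.ker L)] :
    2 ^ k ≤ Fintype.card (LinearMap.ker L) := by
  have h1 := L.finrank_range_add_finrank_ker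
  have h2 := Submodule.finrank_le (LinearMap.range L)
  simp only [Module.finrank_fin_fun] at h1 h2
  rw [Module.card_eq_pow_finrank (K := ZMod 2), ZMod.card]
  exact Nat.pow_le_pow_right (by norm_num) (by omega)

theorem aux_half (n : ℕ) (K : Submodule (ZMod 2) (Fin n → ZMod 2)) [Fintype K] (j : Fin n) :
    2 * (Finset.univ.filter (fun v : K => v.1 j ≠ 0)).card ≤ Fintype.card K := by
  classical
  by_cases h : ∃ w : K, w.1 j ≠ 0
  · obtain ⟨w, hw⟩ := h
    have key : ∀ a b : ZMod 2, a ≠ 0 → b ≠ 0 → a + b = 0 := by decide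
    have h1 : (Finset.univ.filter (fun v : K => v.1 j ≠ 0)).card ≤
        (Finset.univ.filter (fun v : K => ¬ v.1 j ≠ 0)).card := by
      apply Finset.card_le_card_of_injOn (fun v => v + w)
      · intro v hv
        simp only [Finset.coe_filter, Finset.mem_univ, true_and, Set.mem_ofPred_eq] at hv ⊢
        simpa using key _ _ hv hw
      · intro a _ b _ hab
        simpa using hab
    have h2 := Finset.card_filter_add_card_filter_not (s := (Finset.univ : Finset K))
      (fun v : K => v.1 j ≠ 0)
    rw [Finset.card_univ] at h2
    omega
  · push Not at h
    simp [h]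

/-- For all positive integers `m` and `k`, every binary `m × (m+k)` matrix has a nonempty
even set of at most `(1 + 1/(2^k - 1)) * (m+k)/2` columns. -/
theorem stmt_5 (m k : ℕ) (hm : 0 < m) (hk : 0 < k)
    (A : Fin m → Fin (m + k) → ℕ) (hA : ∀ i j, A i j ≤ 1) :
    ∃ S : Finset (Fin (m + k)), S.Nonempty ∧
      (∀ i, Even (∑ j ∈ S, A i j)) ∧
      (S.card : ℝ) ≤ (1 + 1 / (2 ^ k - 1)) * ((m + k) / 2) := by
  classical
  let L : (Fin (m+k) → ZMod 2) →ₗ[ZMod 2] (Fin m → ZMod 2) :=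
    Matrix.mulVecLin (Matrix.of fun i j => (A i j : ZMod 2))
  let K := LinearMap.ker L
  let : Fintype K := Fintype.ofFinite _
  have hc : 2 ^ k ≤ Fintype.card K := aux_card m k L
  let W : K → Finset (Fin (m+k)) := fun v => Finset.univ.filter (fun j => v.1 j ≠ 0)
  have hsum : 2 * ∑ v : K, (W v).card ≤ (m + k) * Fintype.card K := by
    have : ∑ v : K, (W v).card =
        ∑ j, (Finset.univ.filter (fun v : K => v.1 j ≠ 0)).card := by
      simp only [W, Finset.card_filter]
      exact Finset.sum_comm
    rw [this, Finset.mul_sum]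
    calc _ ≤ ∑ j : Fin (m+k), Fintype.card K :=
          Finset.sum_le_sum fun j _ => aux_half _ K j
      _ = _ := by simp
  have h2k : 2 ≤ 2 ^ k := by
    calc 2 = 2 ^ 1 := rfl
      _ ≤ 2 ^ k := Nat.pow_le_pow_right (by norm_num) hk
  set c : ℝ := (1 + 1 / (2 ^ k - 1)) * (((m:ℝ) + k) / 2) with hcdef
  have hW0 : (W 0).card = 0 := by simp [W]
  have hsum' : ∑ v ∈ Finset.univ.erase (0 : K), (W v).card = ∑ v : K, (W v).card := by
    rw [← Finset.add_sum_erase _ _ (Finset.mem_univ (0:K)), hW0, zero_add]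
  have hcard : (Finset.univ.erase (0 : K)).card + 1 = Fintype.card K := by
    rw [Finset.card_erase_add_one (Finset.mem_univ _), Finset.card_univ]
  have hex : ∃ v ∈ Finset.univ.erase (0 : K), ((W v).card : ℝ) ≤ c := by
    apply Finset.exists_le_of_sum_le (g := fun _ => c)
    · rw [← Finset.card_pos]; omega
    · rw [Finset.sum_const, nsmul_eq_mul, ← Nat.cast_sum, hsum']
      have e1 : ((Finset.univ.erase (0 : K)).card : ℝ) = (Fintype.card K : ℝ) - 1 := by
        rw [← hcard]; push_cast; ring
      rw [e1]
      have a1 : (2:ℝ) * ((∑ v : K, (W v).card : ℕ) : ℝ) ≤ ((m:ℝ) + k) * Fintype.card K := by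
        exact_mod_cast hsum
      have a2 : (2:ℝ) ^ k ≤ Fintype.card K := by exact_mod_cast hc
      have a3 : (2:ℝ) ≤ 2 ^ k := by exact_mod_cast h2k
      have a4 : (Fintype.card K : ℝ) ≤ ((Fintype.card K : ℝ) - 1) * (1 + 1 / (2 ^ k - 1)) := by
        have p : (0:ℝ) < 2 ^ k - 1 := by linarith
        have : (1:ℝ) ≤ ((Fintype.card K : ℝ) - 1) * (1 / (2 ^ k - 1)) := by
          rw [mul_one_div, le_div_iff₀ p]; linarith
        linarith
      have a5 := mul_le_mul_of_nonneg_right a4 (by positivity : (0:ℝ) ≤ ((m:ℝ) + k) / 2)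
      rw [hcdef]
      linarith
  obtain ⟨v, hv, hle⟩ := hex
  refine ⟨W v, ?_, ?_, hle⟩
  · by_contra hne
    rw [Finset.not_nonempty_iff_eq_empty] at hne
    apply (Finset.mem_erase.mp hv).1
    ext j
    by_contra hj
    have : j ∈ W v := by simpa [W] using hj
    simp [hne] at this
  · intro i
    rw [← ZMod.natCast_eq_zero_iff_even]
    have h0 : L v.1 = 0 := v.2
    have h1 := congrFun h0 i
    simp only [L, Matrix.mulVecLin_apply, Matrix.mulVec, dotProduct, Matrix.of_apply,
      Pi.zero_apply] at h1
    rw [Nat.cast_sum, ← h1, Finset.sum_filter]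
    apply Finset.sum_congr rfl
    intro j _
    have key : ∀ a b : ZMod 2, (if b ≠ 0 then a else 0) = a * b := by decide
    exact key _ _
end

section
/- For every integer k ≥ 2, the maximum over all binary (2^k−1−k)×(2^k−1) matrices A of the minimum cardinality of a nonempty 1-free set of columns of A equals 2^{k−1}, and the maximum over all such matrices of the minimum cardinality of a nonempty even set of columns also equals 2^{k−1}. That is, u(2^k−1−k, 2^k−1) = ε(2^k−1−k, 2^k−1) = 2^{k−1}. -/
/-- The stopping distance of a binary matrix `A`: the minimum cardinality of a nonempty
1-free set of columns of `A` (a set of columns is 1-free if no row sums to exactly `1`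
over that set). -/
noncomputable def stoppingDistance {m n : ℕ} (A : Fin m → Fin n → ℕ) : ℕ :=
  sInf {c | ∃ S : Finset (Fin n), S.Nonempty ∧ (∀ i, ∑ j ∈ S, A i j ≠ 1) ∧ S.card = c}

/-- The distance of (the code with parity-check matrix) a binary matrix `A`: the minimum
cardinality of a nonempty even set of columns of `A`. -/
noncomputable def codeDistance {m n : ℕ} (A : Fin m → Fin n → ℕ) : ℕ :=
  sInf {c | ∃ S : Finset (Fin n), S.Nonempty ∧ (∀ i, Even (∑ j ∈ S, A i j)) ∧ S.card = c}

/-- `u m n`: the maximum stopping distance over all `m × n` binary matrices. -/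
noncomputable def maxStoppingDistance (m n : ℕ) : ℕ :=
  sSup {d | ∃ A : Fin m → Fin n → ℕ, (∀ i j, A i j ≤ 1) ∧ stoppingDistance A = d}

/-- `ε m n`: the maximum distance over all `m × n` binary matrices. -/
noncomputable def maxCodeDistance (m n : ℕ) : ℕ :=
  sSup {d | ∃ A : Fin m → Fin n → ℕ, (∀ i j, A i j ≤ 1) ∧ codeDistance A = d}

theorem plotkin_aux (k m n : ℕ) (hk : 2 ≤ k) (hn : n = 2 ^ k - 1) (hm : n = m + k)
    (A : Fin m → Fin n → ℕ) :
    ∃ S : Finset (Fin n), S.Nonempty ∧ (∀ i, Even (∑ j ∈ S, A i j)) ∧ S.card ≤ 2 ^ (k - 1) := by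
  classical
  let M : Matrix (Fin m) (Fin n) (ZMod 2) := fun i j => (A i j : ZMod 2)
  let f : (Fin n → ZMod 2) →ₗ[ZMod 2] (Fin m → ZMod 2) := M.mulVecLin
  let K := LinearMap.ker f
  have hfr : k ≤ Module.finrank (ZMod 2) K := by
    have h1 := f.finrank_range_add_finrank_ker
    have h2 : Module.finrank (ZMod 2) (LinearMap.range f) ≤ m := by
      have := Submodule.finrank_le (LinearMap.range f)
      simpa using this
    have h3 : Module.finrank (ZMod 2) (Fin n → ZMod 2) = n := by simp
    change k ≤ Module.finrank (ZMod 2) (LinearMap.ker f)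
    omega
  have hcard : 2 ^ k ≤ Fintype.card K := by
    rw [Module.card_eq_pow_finrank (K := ZMod 2) (V := K), ZMod.card]
    exact Nat.pow_le_pow_right (by norm_num) hfr
  by_contra hcon
  push Not at hcon
  have hz : ∀ a : ZMod 2, a ≠ 0 → a = 1 := by decide
  let supp : K → Finset (Fin n) := fun x => Finset.univ.filter (fun j => x.1 j ≠ 0)
  have hbig : ∀ x : K, x ≠ 0 → 2 ^ (k - 1) + 1 ≤ (supp x).card := by
    intro x hx
    apply hcon (supp x)
    · by_contra he
      rw [Finset.not_nonempty_iff_eq_empty] at he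
      apply hx
      ext j
      by_contra hj
      have : j ∈ supp x := by simpa [supp] using hj
      simp [he] at this
    · intro i
      rw [← ZMod.natCast_eq_zero_iff_even]
      have h0 : f x.1 = 0 := x.2
      have h1 := congrFun h0 i
      simp only [f, Matrix.mulVecLin_apply, Matrix.mulVec, dotProduct, Pi.zero_apply] at h1
      rw [← h1, Nat.cast_sum, Finset.sum_filter]
      apply Finset.sum_congr rfl
      intro j _
      by_cases hj : x.1 j = 0
      · simp [hj]
      · simp [hz _ hj, M]
  have hcol : ∀ j, 2 * (Finset.univ.filter (fun x : K => x.1 j ≠ 0)).card ≤ Fintype.card K := by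
    intro j
    have hs := Finset.card_filter_add_card_filter_not (s := (Finset.univ : Finset K)) (fun x : K => x.1 j ≠ 0)
    rw [Finset.card_univ] at hs
    suffices h : (Finset.univ.filter (fun x : K => x.1 j ≠ 0)).card ≤
        (Finset.univ.filter (fun x : K => ¬ x.1 j ≠ 0)).card by omega
    by_cases hx : ∃ x0 : K, x0.1 j ≠ 0
    · obtain ⟨x0, hx0⟩ := hx
      apply Finset.card_le_card_of_injOn (fun x => x + x0)
      · intro x hx
        simp only [Finset.coe_filter, Finset.mem_univ, true_and, Set.mem_ofPred_eq] at hx ⊢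
        simp only [Submodule.coe_add, Pi.add_apply, hz _ hx, hz _ hx0]
        exact not_not.mpr (by rfl)
      · intro x _ y _ h
        exact add_right_cancel h
    · push Not at hx
      simp [hx]
  have hdc : ∑ x : K, (supp x).card = ∑ j, (Finset.univ.filter (fun x : K => x.1 j ≠ 0)).card := by
    simp only [supp, Finset.card_filter]
    exact Finset.sum_comm
  have hup : 2 * ∑ x : K, (supp x).card ≤ n * Fintype.card K := by
    rw [hdc, Finset.mul_sum]
    calc _ ≤ ∑ j : Fin n, Fintype.card K := Finset.sum_le_sum (fun j _ => hcol j)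
      _ = _ := by simp
  have hlow : (Fintype.card K - 1) * (2 ^ (k - 1) + 1) ≤ ∑ x : K, (supp x).card := by
    calc _ = ∑ x ∈ Finset.univ.erase (0 : K), (2 ^ (k - 1) + 1) := by
            rw [Finset.sum_const, Finset.card_erase_of_mem (Finset.mem_univ _), Finset.card_univ,
              smul_eq_mul]
      _ ≤ ∑ x ∈ Finset.univ.erase (0 : K), (supp x).card :=
            Finset.sum_le_sum (fun x hx => hbig x (Finset.ne_of_mem_erase hx))
      _ ≤ _ := Finset.sum_le_sum_of_subset (Finset.erase_subset _ _)
  obtain ⟨l, rfl⟩ : ∃ l, k = l + 1 := ⟨k - 1, by omega⟩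
  have hl : 2 ≤ 2 ^ l := by
    calc 2 = 2 ^ 1 := rfl
      _ ≤ 2 ^ l := Nat.pow_le_pow_right (by norm_num) (by omega)
  rw [Nat.add_sub_cancel] at hlow
  rw [pow_succ] at hn hcard
  generalize 2 ^ l = q at *
  generalize Fintype.card K = c at *
  generalize ∑ x : K, (supp x).card = s at *
  obtain ⟨c', rfl⟩ : ∃ c', c = c' + 1 := ⟨c - 1, by omega⟩
  obtain ⟨p, rfl⟩ : ∃ p, q = p + 1 := ⟨q - 1, by omega⟩
  have : n = 2 * p + 1 := by omega
  subst this
  rw [Nat.add_sub_cancel] at hlow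
  nlinarith

theorem constr_aux (l : ℕ) : ∃ (R C : Type) (_ : Fintype R) (_ : Fintype C) (A : R → C → ℕ),
    Fintype.card C = 2 ^ (l + 1) - 1 ∧ Fintype.card R + (l + 1) = Fintype.card C ∧
    (∀ i j, A i j ≤ 1) ∧
    ∀ S : Finset C, S.Nonempty → (∀ i, ∑ j ∈ S, A i j ≠ 1) → 2 ^ l ≤ S.card := by
  classical
  induction l with
  | zero =>
    refine ⟨Empty, Unit, inferInstance, inferInstance, fun _ _ => 0, by simp, by simp, by simp, ?_⟩
    intro S hS _
    simpa using hS
  | succ l ih =>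
    obtain ⟨R, C, _, _, A, hC, hR, hA, hS⟩ := ih
    have hp : 0 < 2 ^ (l + 1) := by positivity
    refine ⟨R ⊕ C, Option (C ⊕ C), inferInstance, inferInstance,
      fun r c => match r, c with
        | .inl r, some (.inl v) => A r v
        | .inl _, _ => 0
        | .inr _, none => 1
        | .inr w, some (.inl v) => if v = w then 1 else 0
        | .inr w, some (.inr v) => if v = w then 1 else 0, ?_, ?_, ?_, ?_⟩
    · rw [Fintype.card_option, Fintype.card_sum, hC, pow_succ 2 (l + 1)]; omega
    · rw [Fintype.card_option, Fintype.card_sum, Fintype.card_sum]; omega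
    · rintro (r | w) (_ | v | v) <;> simp only [hA, le_refl, zero_le] <;> split_ifs <;> simp
    · intro S hne h1
      let X : Finset C := Finset.univ.filter (fun v => some (Sum.inl v) ∈ S)
      let Y : Finset C := Finset.univ.filter (fun v => some (Sum.inr v) ∈ S)
      have hsum : ∀ g : Option (C ⊕ C) → ℕ, ∑ c ∈ S, g c =
          (if none ∈ S then g none else 0) + (∑ v ∈ X, g (some (.inl v)) +
            ∑ v ∈ Y, g (some (.inr v))) := by
        intro g
        have h0 : ∑ c ∈ S, g c = ∑ c, if c ∈ S then g c else 0 := by simp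
        rw [h0, Fintype.sum_option, Fintype.sum_sum_type, Finset.sum_filter, Finset.sum_filter]
      have hcard : S.card = (if none ∈ S then 1 else 0) + (X.card + Y.card) := by
        rw [Finset.card_eq_sum_ones, hsum]; simp
      have hX : ∀ i, ∑ v ∈ X, A i v ≠ 1 := by
        intro i
        have := h1 (.inl i)
        rw [hsum] at this
        simpa using this
      have hw : ∀ w, (if none ∈ S then 1 else 0) + ((if w ∈ X then 1 else 0) +
          (if w ∈ Y then 1 else 0)) ≠ 1 := by
        intro w
        have := h1 (.inr w)
        rw [hsum] at this
        simpa using this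
      by_cases he : none ∈ S
      · simp only [he, if_true] at hcard hw
        have : Finset.univ ⊆ X ∪ Y := by
          intro w _
          have := hw w
          rw [Finset.mem_union]
          by_contra hh
          push Not at hh
          simp [hh.1, hh.2] at this
        have h2 := (Finset.card_le_card this).trans (Finset.card_union_le X Y)
        rw [Finset.card_univ] at h2
        omega
      · simp only [he, if_false, zero_add] at hcard hw
        have hXY : X = Y := by
          ext w
          have := hw w
          by_cases hx : w ∈ X <;> by_cases hy : w ∈ Y <;> simp_all
        have hXne : X.Nonempty := by
          have : 0 < S.card := hne.card_pos
          rw [← Finset.card_pos]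
          rw [← hXY] at hcard
          omega
        have := hS X hXne hX
        rw [← hXY] at hcard
        rw [pow_succ]
        omega

theorem constr_fin (k m n : ℕ) (hk : 2 ≤ k) (hn : n = 2 ^ k - 1) (hm : n = m + k) :
    ∃ A : Fin m → Fin n → ℕ, (∀ i j, A i j ≤ 1) ∧
    ∀ S : Finset (Fin n), S.Nonempty → (∀ i, ∑ j ∈ S, A i j ≠ 1) → 2 ^ (k - 1) ≤ S.card := by
  obtain ⟨l, rfl⟩ : ∃ l, k = l + 1 := ⟨k - 1, by omega⟩
  obtain ⟨R, C, _, _, A, hC, hR, hA, hS⟩ := constr_aux l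
  let eC := Fintype.equivFinOfCardEq (hC.trans hn.symm)
  let eR := Fintype.equivFinOfCardEq (α := R) (n := m) (by omega)
  refine ⟨fun i j => A (eR.symm i) (eC.symm j), fun _ _ => hA _ _, ?_⟩
  intro S hne h1
  have := hS (S.map eC.symm.toEmbedding) (by simpa using hne) (by
    intro i
    have := h1 (eR i)
    simpa using this)
  simpa using this

theorem stmt_6 (k : ℕ) (hk : 2 ≤ k) :
    maxStoppingDistance (2 ^ k - 1 - k) (2 ^ k - 1) = 2 ^ (k - 1) ∧
    maxCodeDistance (2 ^ k - 1 - k) (2 ^ k - 1) = 2 ^ (k - 1) := by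
  have hlt : k < 2 ^ k := Nat.lt_two_pow_self
  have hm : 2 ^ k - 1 = (2 ^ k - 1 - k) + k := by omega
  have hP := plotkin_aux k _ _ hk rfl hm
  obtain ⟨A, hA, hS⟩ := constr_fin k _ _ hk rfl hm
  have ev : ∀ {a : ℕ}, Even a → a ≠ 1 := by rintro a h rfl; simp at h
  have hsu : ∀ B : Fin (2 ^ k - 1 - k) → Fin (2 ^ k - 1) → ℕ,
      stoppingDistance B ≤ 2 ^ (k - 1) := by
    intro B
    obtain ⟨S, h1, h2, h3⟩ := hP B
    unfold stoppingDistance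
    refine le_trans (Nat.sInf_le ?_) h3
    exact ⟨S, h1, fun i => ev (h2 i), rfl⟩
  have hcu : ∀ B : Fin (2 ^ k - 1 - k) → Fin (2 ^ k - 1) → ℕ,
      codeDistance B ≤ 2 ^ (k - 1) := by
    intro B
    obtain ⟨S, h1, h2, h3⟩ := hP B
    unfold codeDistance
    refine le_trans (Nat.sInf_le ?_) h3
    exact ⟨S, h1, h2, rfl⟩
  obtain ⟨S, h1, h2, h3⟩ := hP A
  constructor
  · apply IsGreatest.csSup_eq
    refine ⟨⟨A, hA, le_antisymm (hsu A) ?_⟩, ?_⟩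
    · unfold stoppingDistance
      refine le_csInf ?_ ?_
      · exact ⟨_, S, h1, fun i => ev (h2 i), rfl⟩
      rintro _ ⟨T, t1, t2, rfl⟩
      exact hS T t1 t2
    · rintro _ ⟨B, _, rfl⟩
      exact hsu B
  · apply IsGreatest.csSup_eq
    refine ⟨⟨A, hA, le_antisymm (hcu A) ?_⟩, ?_⟩
    · unfold codeDistance
      refine le_csInf ?_ ?_
      · exact ⟨_, S, h1, h2, rfl⟩
      rintro _ ⟨T, t1, t2, rfl⟩
      exact hS T t1 (fun i => ev (t2 i))
    · rintro _ ⟨B, _, rfl⟩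
      exact hcu B
end

section
/- For k ≥ 2, let U_k be the binary matrix whose columns are indexed by the integers 1, 2, …, 2^k−1, whose rows are indexed by those integers m with 1 ≤ m ≤ 2^k−1 that are not powers of 2, and where row m (with 2^t < m < 2^{t+1} for the integer t = ⌊log₂ m⌋) has 1-entries exactly in columns m, m−2^t, and 2^t. Then every nonempty 1-free set of columns of U_k has cardinality at least 2^{k−1}. -/
theorem aux7 (t : ℕ) : ∀ (S : Finset ℕ), (∀ x ∈ S, 1 ≤ x ∧ x < 2 ^ (t + 1)) → S.Nonempty →
    (∀ s ≤ t, ∀ j, 1 ≤ j → j < 2 ^ s → (2 ^ s ∈ S → j ∈ S ∨ 2 ^ s + j ∈ S) ∧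
      (2 ^ s ∉ S → (j ∈ S ↔ 2 ^ s + j ∈ S))) → 2 ^ t ≤ S.card := by
  induction t with
  | zero =>
    intro S _ hS _
    simpa using hS.card_pos
  | succ t ih =>
    intro S hsub hS H
    have hp : 2 ^ (t + 1 + 1) = 2 * 2 ^ (t + 1) := by ring
    have hp' : 2 ^ (t + 1) = 2 * 2 ^ t := by ring
    have HT := H (t + 1) le_rfl
    by_cases hT : 2 ^ (t + 1) ∈ S
    · have : (Finset.range (2 ^ (t + 1))).card ≤ S.card := by
        apply Finset.card_le_card_of_injOn (fun j => if j ∈ S then j else 2 ^ (t + 1) + j)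
        · intro j hj
          have hj' : j < 2 ^ (t + 1) := by simpa using hj
          by_cases h : j ∈ S
          · simpa [h] using h
          · rcases Nat.eq_zero_or_pos j with h0 | h0
            · subst h0; simpa [h] using hT
            · have := ((HT j h0 hj').1 hT).resolve_left h
              simpa [h] using this
        · intro a ha b hb hab
          have ha' : a < 2 ^ (t + 1) := by simpa using ha
          have hb' : b < 2 ^ (t + 1) := by simpa using hb
          dsimp only at hab
          split_ifs at hab <;> omega
      simpa using this
    · set S' := S.filter (· < 2 ^ (t + 1)) with hS'
      have hne : S'.Nonempty := by
        obtain ⟨x, hx⟩ := hS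
        have hx1 := hsub x hx
        by_cases h : x < 2 ^ (t + 1)
        · exact ⟨x, by simp [hS', hx, h]⟩
        · have hxT : x ≠ 2 ^ (t + 1) := fun h => hT (h ▸ hx)
          refine ⟨x - 2 ^ (t + 1), ?_⟩
          have h1 := (HT (x - 2 ^ (t + 1)) (by omega) (by omega)).2 hT
          rw [show 2 ^ (t + 1) + (x - 2 ^ (t + 1)) = x by omega] at h1
          simp only [hS', Finset.mem_filter]
          exact ⟨h1.2 hx, by omega⟩
      have hc : 2 ^ t ≤ S'.card := by
        apply ih S' _ hne
        · intro s hs j hj hj2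
          have hle : 2 ^ s ≤ 2 ^ t := Nat.pow_le_pow_right (by norm_num) hs
          have h := H s (by omega) j hj hj2
          have e1 : 2 ^ s ∈ S' ↔ 2 ^ s ∈ S := by
            simp only [hS', Finset.mem_filter]; exact ⟨fun h => h.1, fun h => ⟨h, by omega⟩⟩
          have e2 : j ∈ S' ↔ j ∈ S := by
            simp only [hS', Finset.mem_filter]; exact ⟨fun h => h.1, fun h => ⟨h, by omega⟩⟩
          have e3 : 2 ^ s + j ∈ S' ↔ 2 ^ s + j ∈ S := by
            simp only [hS', Finset.mem_filter]; exact ⟨fun h => h.1, fun h => ⟨h, by omega⟩⟩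
          rw [e1, e2, e3]; exact h
        · intro x hx
          simp only [hS', Finset.mem_filter] at hx
          exact ⟨(hsub x hx.1).1, hx.2⟩
      have hd : Disjoint S' (S'.image (2 ^ (t + 1) + ·)) := by
        rw [Finset.disjoint_left]
        intro a ha hb
        simp only [hS', Finset.mem_filter, Finset.mem_image] at ha hb
        obtain ⟨b, _, rfl⟩ := hb
        omega
      have hu : S' ∪ S'.image (2 ^ (t + 1) + ·) ⊆ S := by
        intro a ha
        simp only [hS', Finset.mem_union, Finset.mem_filter, Finset.mem_image] at ha
        rcases ha with ha | ⟨b, hb, rfl⟩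
        · exact ha.1
        · exact ((HT b (hsub b hb.1).1 hb.2).2 hT).1 hb.1
      have := Finset.card_le_card hu
      rw [Finset.card_union_of_disjoint hd,
        Finset.card_image_of_injective _ (add_right_injective _)] at this
      omega

/-- For `k ≥ 2`, let `U_k` be the binary matrix whose columns are indexed by the integers
`1, …, 2^k − 1`, whose rows are indexed by those `m` in this range that are not powers of
`2`, and where row `m` (with `2^t < m < 2^(t+1)`, `t = ⌊log₂ m⌋`) has its 1-entries exactly
in columns `m`, `m − 2^t` and `2^t`.  Then every nonempty 1-free set of columns of `U_k`
has cardinality at least `2^(k−1)`. -/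
theorem stmt_7 (k : ℕ) (hk : 2 ≤ k)
    (S : Finset ℕ) (hSsub : S ⊆ Finset.Icc 1 (2 ^ k - 1)) (hS : S.Nonempty)
    (hfree : ∀ m ∈ Finset.Icc 1 (2 ^ k - 1), (¬ ∃ t : ℕ, m = 2 ^ t) →
      (∑ c ∈ S, if c = m ∨ c = m - 2 ^ (Nat.log 2 m) ∨ c = 2 ^ (Nat.log 2 m)
        then (1 : ℕ) else 0) ≠ 1) :
    2 ^ (k - 1) ≤ S.card := by
  obtain ⟨t, rfl⟩ : ∃ t, k = t + 1 := ⟨k - 1, by omega⟩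
  rw [Nat.add_sub_cancel]
  apply aux7 t S _ hS
  · intro s hs j hj hj2
    have hle : 2 ^ (s + 1) ≤ 2 ^ (t + 1) := Nat.pow_le_pow_right (by norm_num) (by omega)
    have hp : 2 ^ (s + 1) = 2 * 2 ^ s := by ring
    have hlog : Nat.log 2 (2 ^ s + j) = s :=
      Nat.log_eq_of_pow_le_of_lt_pow (by omega) (by omega)
    have h := hfree (2 ^ s + j) (by rw [Finset.mem_Icc]; omega) (by
      rintro ⟨u, hu⟩
      have : u = s := by rw [hu, Nat.log_pow (by norm_num)] at hlog; exact hlog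
      subst this; omega)
    rw [hlog, Nat.add_sub_cancel_left, Finset.sum_boole, Nat.cast_id] at h
    have key : ∀ x, ¬ (S.filter (fun c => c = 2 ^ s + j ∨ c = j ∨ c = 2 ^ s)) = {x} :=
      fun x hx => h (by rw [hx, Finset.card_singleton])
    constructor
    · intro h1
      by_contra! h2
      apply key (2 ^ s)
      ext a
      simp only [Finset.mem_filter, Finset.mem_singleton]
      grind
    · intro h1
      constructor
      · intro h2
        by_contra h3
        apply key j
        ext a
        simp only [Finset.mem_filter, Finset.mem_singleton]
        grind
      · intro h2
        by_contra h3
        apply key (2 ^ s + j)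
        ext a
        simp only [Finset.mem_filter, Finset.mem_singleton]
        grind
  · intro x hx
    have := Finset.mem_Icc.1 (hSsub hx)
    omega
end

section
/- For all positive integers n and k, u(n, n+k) ≥ ε(n, n+k) − 2^{k−1} − 1, where u(n,n+k) is the maximum over all binary n×(n+k) matrices A of the minimum cardinality of a nonempty 1-free set of columns of A, and ε(n,n+k) is the maximum over all binary n×(n+k) matrices A of the minimum cardinality of a nonempty even set of columns of A. -/
open Classical in
theorem aux_simplex (k : ℕ) : ∃ (C R : Type) (_ : Fintype C) (_ : Fintype R) (B : R → C → Prop),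
    Fintype.card C + 1 = 2 ^ k ∧ Fintype.card R + k = Fintype.card C ∧
    ∀ S : Finset C, S.Nonempty → (∀ r, ¬ ∃! j, j ∈ S ∧ B r j) →
      Fintype.card C + 1 ≤ 2 * S.card := by
  induction k with
  | zero =>
    refine ⟨Empty, Empty, inferInstance, inferInstance, fun _ _ => False, by simp, by simp, ?_⟩
    rintro S ⟨x, _⟩
    exact x.elim
  | succ k ih =>
    obtain ⟨C, R, _, _, B, h1, h2, h3⟩ := ih
    refine ⟨Option (C ⊕ C), C ⊕ R, inferInstance, inferInstance,
      fun i j => Sum.elim (fun c => j = none ∨ j = some (Sum.inl c) ∨ j = some (Sum.inr c))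
        (fun r => ∃ c, j = some (Sum.inl c) ∧ B r c) i, ?_, ?_, ?_⟩
    · simp only [Fintype.card_option, Fintype.card_sum]; rw [pow_succ]; omega
    · simp only [Fintype.card_option, Fintype.card_sum]; omega
    intro S hS hfree
    have hl : ∀ c, ¬ ∃! j, j ∈ S ∧ (j = none ∨ j = some (Sum.inl c) ∨ j = some (Sum.inr c)) :=
      fun c => hfree (Sum.inl c)
    have hr : ∀ r, ¬ ∃! j, j ∈ S ∧ ∃ c, j = some (Sum.inl c) ∧ B r c :=
      fun r => hfree (Sum.inr r)
    simp only [Fintype.card_option, Fintype.card_sum]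
    by_cases hp : none ∈ S
    · let g : Option (C ⊕ C) → Option C := Option.map (Sum.elim id id)
      have hsur : S.image g = Finset.univ := by
        ext x
        simp only [Finset.mem_image, Finset.mem_univ, iff_true]
        cases x with
        | none => exact ⟨none, hp, rfl⟩
        | some c =>
          by_contra hc
          push Not at hc
          apply hl c
          refine ⟨none, ⟨hp, Or.inl rfl⟩, ?_⟩
          rintro y ⟨hy, rfl | rfl | rfl⟩
          · rfl
          · exact absurd rfl (hc _ hy)
          · exact absurd rfl (hc _ hy)
      have := Finset.card_image_le (s := S) (f := g)
      rw [hsur, Finset.card_univ, Fintype.card_option] at this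
      omega
    · have hlr : ∀ c, some (Sum.inl c) ∈ S ↔ some (Sum.inr c) ∈ S := by
        intro c
        constructor
        · intro h
          by_contra hc
          apply hl c
          refine ⟨_, ⟨h, Or.inr (Or.inl rfl)⟩, ?_⟩
          rintro y ⟨hy, rfl | rfl | rfl⟩
          · exact absurd hy hp
          · rfl
          · exact absurd hy hc
        · intro h
          by_contra hc
          apply hl c
          refine ⟨_, ⟨h, Or.inr (Or.inr rfl)⟩, ?_⟩
          rintro y ⟨hy, rfl | rfl | rfl⟩
          · exact absurd hy hp
          · exact absurd hy hc
          · rfl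
      let T : Finset C := Finset.univ.filter (fun c => some (Sum.inl c) ∈ S)
      have hT : ∀ c, c ∈ T ↔ some (Sum.inl c) ∈ S := by simp [T]
      have hTne : T.Nonempty := by
        obtain ⟨x, hx⟩ := hS
        match x, hx with
        | none, hx => exact absurd hx hp
        | some (Sum.inl c), hx => exact ⟨c, (hT c).2 hx⟩
        | some (Sum.inr c), hx => exact ⟨c, (hT c).2 ((hlr c).2 hx)⟩
      have h := h3 T hTne (by
        rintro r ⟨c, ⟨hc, hB⟩, hu⟩
        apply hr r
        refine ⟨some (Sum.inl c), ⟨(hT c).1 hc, c, rfl, hB⟩, ?_⟩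
        rintro y ⟨hy, c', rfl, hB'⟩
        rw [hu c' ⟨(hT c').2 hy, hB'⟩])
      have hsub : (T.disjSum T).image some ⊆ S := by
        intro x hx
        simp only [Finset.mem_image, Finset.mem_disjSum] at hx
        obtain ⟨a, ⟨c, hc, rfl⟩ | ⟨c, hc, rfl⟩, rfl⟩ := hx
        · exact (hT c).1 hc
        · exact (hlr c).1 ((hT c).1 hc)
      have h4 := Finset.card_le_card hsub
      rw [Finset.card_image_of_injective _ (Option.some_injective _), Finset.card_disjSum] at h4
      omega

open Classical in
theorem aux_blow (n k q r : ℕ) (hk : 0 < k)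
    (hN : n + k = (q + 1) * (2 ^ k - 1) + r) :
    ∃ (C R : Type) (_ : Fintype C) (_ : Fintype R) (B : R → C → Prop),
    Fintype.card C = n + k ∧ Fintype.card R = n ∧
    ∀ S : Finset C, S.Nonempty → (∀ r, ¬ ∃! j, j ∈ S ∧ B r j) →
      (q + 1) * 2 ^ (k - 1) ≤ S.card := by
  obtain ⟨C, R, _, _, B, h1, h2, h3⟩ := aux_simplex k
  have hpow : 2 ^ k = 2 * 2 ^ (k - 1) := by
    rw [← pow_succ']; congr 1; omega
  have hpos : 0 < 2 ^ (k - 1) := by positivity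
  have hC : Fintype.card C = 2 ^ k - 1 := by omega
  have : Nonempty C := Fintype.card_pos_iff.1 (by omega)
  obtain ⟨c0⟩ := this
  let f : (C × Fin q) ⊕ Fin r → C := Sum.elim Prod.fst (fun _ => c0)
  have hcard : Fintype.card C + (Fintype.card C * q + r) = n + k := by
    rw [hN, ← hC]; ring
  refine ⟨C ⊕ ((C × Fin q) ⊕ Fin r), R ⊕ ((C × Fin q) ⊕ Fin r), inferInstance, inferInstance,
    fun i j => Sum.elim (fun r => ∃ c, j = Sum.inl c ∧ B r c)
      (fun e => j = Sum.inl (f e) ∨ j = Sum.inr e) i, ?_, ?_, ?_⟩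
  · simpa using hcard
  · simp only [Fintype.card_sum, Fintype.card_prod, Fintype.card_fin]; omega
  intro S hS hfree
  have hl : ∀ r, ¬ ∃! j, j ∈ S ∧ ∃ c, j = Sum.inl c ∧ B r c := fun r => hfree (Sum.inl r)
  have hr : ∀ e, ¬ ∃! j, j ∈ S ∧ (j = Sum.inl (f e) ∨ j = Sum.inr e) :=
    fun e => hfree (Sum.inr e)
  have hlr : ∀ e, Sum.inl (f e) ∈ S ↔ Sum.inr e ∈ S := by
    intro e
    constructor
    · intro h
      by_contra hc
      apply hr e
      refine ⟨_, ⟨h, Or.inl rfl⟩, ?_⟩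
      rintro y ⟨hy, rfl | rfl⟩
      · rfl
      · exact absurd hy hc
    · intro h
      by_contra hc
      apply hr e
      refine ⟨_, ⟨h, Or.inr rfl⟩, ?_⟩
      rintro y ⟨hy, rfl | rfl⟩
      · exact absurd hy hc
      · rfl
  let T : Finset C := Finset.univ.filter (fun c => Sum.inl c ∈ S)
  have hT : ∀ c, c ∈ T ↔ Sum.inl c ∈ S := by simp [T]
  have hTne : T.Nonempty := by
    obtain ⟨x, hx⟩ := hS
    match x, hx with
    | Sum.inl c, hx => exact ⟨c, (hT c).2 hx⟩
    | Sum.inr e, hx => exact ⟨f e, (hT _).2 ((hlr e).2 hx)⟩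
  have h := h3 T hTne (by
    rintro r ⟨c, ⟨hc, hB⟩, hu⟩
    apply hl r
    refine ⟨Sum.inl c, ⟨(hT c).1 hc, c, rfl, hB⟩, ?_⟩
    rintro y ⟨hy, c', rfl, hB'⟩
    rw [hu c' ⟨(hT c').2 hy, hB'⟩])
  have hsub : T.disjSum ((T ×ˢ (Finset.univ : Finset (Fin q))).image Sum.inl) ⊆ S := by
    intro x hx
    simp only [Finset.mem_disjSum, Finset.mem_image, Finset.mem_product] at hx
    obtain ⟨c, hc, rfl⟩ | ⟨_, ⟨⟨c, i⟩, ⟨hc, -⟩, rfl⟩, rfl⟩ := hx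
    · exact (hT c).1 hc
    · exact (hlr (Sum.inl (c, i))).1 ((hT c).1 hc)
  have h4 := Finset.card_le_card hsub
  rw [Finset.card_disjSum, Finset.card_image_of_injective _ Sum.inl_injective,
    Finset.card_product, Finset.card_univ, Fintype.card_fin] at h4
  have h5 : 2 ^ (k - 1) ≤ T.card := by omega
  calc (q + 1) * 2 ^ (k - 1) ≤ (q + 1) * T.card := Nat.mul_le_mul_left _ h5
    _ = T.card + T.card * q := by ring
    _ ≤ _ := h4

/-- the kernel code -/
noncomputable def auxMap {n N : ℕ} (A : Fin n → Fin N → ℕ) :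
    (Fin N → ZMod 2) →ₗ[ZMod 2] (Fin n → ZMod 2) :=
  Matrix.mulVecLin (Matrix.of fun i j => (A i j : ZMod 2))

theorem aux_card_s8 {n k : ℕ} (A : Fin n → Fin (n + k) → ℕ) :
    2 ^ k ≤ Nat.card (LinearMap.ker (auxMap A)) := by
  have h := LinearMap.finrank_range_add_finrank_ker (auxMap A)
  have h2 := Submodule.finrank_le (LinearMap.range (auxMap A))
  simp only [Module.finrank_fin_fun] at h h2
  rw [Module.natCard_eq_pow_finrank (K := ZMod 2)]
  rw [Nat.card_zmod]
  exact Nat.pow_le_pow_right (by norm_num) (by omega)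

/-- support -/
noncomputable def auxSupp {N : ℕ} (c : Fin N → ZMod 2) : Finset (Fin N) :=
  Finset.univ.filter (fun j => c j ≠ 0)

theorem aux_even {n N : ℕ} (A : Fin n → Fin N → ℕ) (c : Fin N → ZMod 2)
    (hc : c ∈ LinearMap.ker (auxMap A)) (i : Fin n) :
    Even (∑ j ∈ auxSupp c, A i j) := by
  rw [← ZMod.natCast_eq_zero_iff_even]
  have h : (auxMap A c) i = 0 := by rw [LinearMap.mem_ker.1 hc]; rfl
  rw [← h]
  simp only [auxMap, Matrix.mulVecLin_apply, Matrix.mulVec, dotProduct, Matrix.of_apply, auxSupp]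
  push_cast
  rw [Finset.sum_filter]
  apply Finset.sum_congr rfl
  intro j _
  have : ∀ x : ZMod 2, x = 0 ∨ x = 1 := by decide
  rcases this (c j) with h | h <;> simp [h]

theorem aux_supp_ne {N : ℕ} (c : Fin N → ZMod 2) (hc : c ≠ 0) : (auxSupp c).Nonempty := by
  obtain ⟨j, hj⟩ := Function.ne_iff.1 hc
  exact ⟨j, by simpa [auxSupp] using hj⟩

theorem aux_exists {n k : ℕ} (hk : 0 < k) (A : Fin n → Fin (n + k) → ℕ) :
    ∃ S : Finset (Fin (n + k)), S.Nonempty ∧ ∀ i, Even (∑ j ∈ S, A i j) := by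
  have h := aux_card_s8 A
  have h1 : 1 < Nat.card (LinearMap.ker (auxMap A)) :=
    lt_of_lt_of_le (Nat.one_lt_two_pow hk.ne') h
  have := Finite.one_lt_card_iff_nontrivial.1 h1
  obtain ⟨⟨c, hc⟩, hne⟩ := exists_ne (0 : LinearMap.ker (auxMap A))
  exact ⟨auxSupp c, aux_supp_ne c (fun h => hne (Subtype.ext h)), aux_even A c hc⟩

theorem aux_plotkin {n N : ℕ} (A : Fin n → Fin N → ℕ) :
    2 * ((Nat.card (LinearMap.ker (auxMap A)) - 1) * codeDistance A)
      ≤ N * Nat.card (LinearMap.ker (auxMap A)) := by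
  classical
  set K := LinearMap.ker (auxMap A) with hK
  have : Fintype K := Fintype.ofFinite _
  rw [Nat.card_eq_fintype_card]
  have hlow : (Fintype.card K - 1) * codeDistance A ≤ ∑ c : K, (auxSupp c.1).card := by
    rw [← Finset.sum_erase_add _ _ (Finset.mem_univ (0 : K))]
    refine le_trans ?_ (Nat.le_add_right _ _)
    rw [← Finset.card_univ, ← Finset.card_erase_of_mem (Finset.mem_univ (0 : K)), ← smul_eq_mul]
    apply Finset.card_nsmul_le_sum
    intro c hc
    apply Nat.sInf_le
    exact ⟨auxSupp c.1, aux_supp_ne _ (fun h => (Finset.ne_of_mem_erase hc) (Subtype.ext h)),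
      aux_even A c.1 c.2, rfl⟩
  have hup : 2 * ∑ c : K, (auxSupp c.1).card ≤ N * Fintype.card K := by
    have : ∑ c : K, (auxSupp c.1).card
        = ∑ j : Fin N, (Finset.univ.filter (fun c : K => c.1 j ≠ 0)).card := by
      simp only [auxSupp, Finset.card_filter]
      rw [Finset.sum_comm]
    rw [this, Finset.mul_sum]
    have hN : N * Fintype.card K = ∑ _j : Fin N, Fintype.card K := by simp
    rw [hN]
    apply Finset.sum_le_sum
    intro j _
    have hsplit := Finset.card_filter_add_card_filter_not (s := (Finset.univ : Finset K))
      (fun c : K => c.1 j ≠ 0)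
    rw [Finset.card_univ] at hsplit
    have hle : (Finset.univ.filter (fun c : K => c.1 j ≠ 0)).card ≤
        (Finset.univ.filter (fun c : K => ¬ c.1 j ≠ 0)).card := by
      by_cases hex : ∃ c : K, c.1 j ≠ 0
      · obtain ⟨c0, hc0⟩ := hex
        apply Finset.card_le_card_of_injOn (fun c => c + c0)
        · intro c hc
          have hc' : c.1 j ≠ 0 := by simpa using hc
          have : ∀ x y : ZMod 2, x ≠ 0 → y ≠ 0 → x + y = 0 := by decide
          have h := this _ _ hc' hc0
          simpa using h
        · intro a _ b _ hab
          exact add_right_cancel hab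
      · push Not at hex
        simp [hex]
    omega
  omega

theorem aux_upper {n k : ℕ} (hk : 0 < k) (A : Fin n → Fin (n + k) → ℕ) :
    (2 ^ k - 1) * codeDistance A ≤ (n + k) * 2 ^ (k - 1) := by
  have h1 := aux_plotkin A
  have h2 := aux_card_s8 A
  have hpow : 2 ^ k = 2 * 2 ^ (k - 1) := by
    rw [← pow_succ']; congr 1; omega
  have hpos : 0 < 2 ^ (k - 1) := by positivity
  generalize Nat.card (LinearMap.ker (auxMap A)) = M at *
  generalize codeDistance A = d at *
  generalize 2 ^ (k - 1) = Q at *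
  rw [hpow] at h2 ⊢
  generalize n + k = N at *
  zify [show 1 ≤ M by omega, show 1 ≤ 2 * Q by omega] at h1 h2 hpos ⊢
  by_cases h : 2 * (d : ℤ) ≤ N
  · have hN : (0 : ℤ) ≤ N := by positivity
    nlinarith [mul_le_mul_of_nonneg_left h (show (0 : ℤ) ≤ 2 * Q - 1 by linarith)]
  · push Not at h
    nlinarith [mul_le_mul_of_nonneg_right h2 (sub_nonneg.2 h.le)]

theorem aux_stop_le {n N : ℕ} (A : Fin n → Fin N → ℕ) : stoppingDistance A ≤ N := by
  unfold stoppingDistance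
  by_cases h : {c | ∃ S : Finset (Fin N), S.Nonempty ∧ (∀ i, ∑ j ∈ S, A i j ≠ 1) ∧
      S.card = c}.Nonempty
  · obtain ⟨S, _, _, hS⟩ := Nat.sInf_mem h
    rw [← hS]
    simpa using Finset.card_le_univ S
  · rw [Set.not_nonempty_iff_eq_empty.1 h]; simp

open Classical in
theorem aux_lower (n k q r : ℕ) (hk : 0 < k)
    (hN : n + k = (q + 1) * (2 ^ k - 1) + r) :
    (q + 1) * 2 ^ (k - 1) ≤ maxStoppingDistance n (n + k) := by
  obtain ⟨C, R, _, _, B, hC, hR, h⟩ := aux_blow n k q r hk hN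
  let eC : Fin (n + k) ≃ C := (Fintype.equivFinOfCardEq hC).symm
  let eR : Fin n ≃ R := (Fintype.equivFinOfCardEq hR).symm
  let A : Fin n → Fin (n + k) → ℕ := fun i j => if B (eR i) (eC j) then 1 else 0
  have hbound : (q + 1) * 2 ^ (k - 1) ≤ stoppingDistance A := by
    apply le_csInf
    · obtain ⟨S, hS, hE⟩ := aux_exists hk A
      refine ⟨_, S, hS, ?_, rfl⟩
      intro i hi
      have := hE i
      rw [hi] at this
      exact absurd this (by decide)
    · rintro c ⟨S, hS, hfree, rfl⟩
      rw [← Finset.card_map eC.toEmbedding]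
      apply h _ (by simpa using hS)
      rintro r ⟨j, ⟨hj, hB⟩, hu⟩
      apply hfree (eR.symm r)
      simp only [A, Equiv.apply_symm_apply]
      rw [← Finset.card_filter, Finset.card_eq_one]
      simp only [Finset.mem_map, Equiv.coe_toEmbedding] at hj
      obtain ⟨a, ha, rfl⟩ := hj
      refine ⟨a, ?_⟩
      ext b
      simp only [Finset.mem_filter, Finset.mem_singleton]
      constructor
      · rintro ⟨hb, hBb⟩
        exact eC.injective (hu (eC b) ⟨by simpa using hb, hBb⟩)
      · rintro rfl
        exact ⟨ha, hB⟩
  refine hbound.trans (le_csSup ⟨n + k, ?_⟩ ⟨A, ?_, rfl⟩)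
  · rintro d ⟨A, _, rfl⟩
    exact aux_stop_le A
  · intro i j
    simp only [A]
    split_ifs <;> simp

/-- For all positive integers `n` and `k`, `u(n, n+k) ≥ ε(n, n+k) − 2^(k−1) − 1`. -/
theorem stmt_8 (n k : ℕ) (hn : 0 < n) (hk : 0 < k) :
    maxCodeDistance n (n + k) - 2 ^ (k - 1) - 1 ≤ maxStoppingDistance n (n + k) := by
  have hpow : 2 ^ k = 2 * 2 ^ (k - 1) := by
    rw [← pow_succ']; congr 1; omega
  have hpos : 0 < 2 ^ (k - 1) := by positivity
  have hT : 0 < 2 ^ k - 1 := by omega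
  have hdiv := Nat.div_add_mod (n + k) (2 ^ k - 1)
  have hmod := Nat.mod_lt (n + k) hT
  have hlow : ((n + k) / (2 ^ k - 1)) * 2 ^ (k - 1) ≤ maxStoppingDistance n (n + k) := by
    rcases Nat.eq_zero_or_eq_succ_pred ((n + k) / (2 ^ k - 1)) with h | h
    · rw [h]; simp
    · rw [h]
      apply aux_lower n k _ ((n + k) % (2 ^ k - 1)) hk
      rw [← Nat.succ_eq_add_one, ← h, mul_comm]
      exact hdiv.symm
  have hup : maxCodeDistance n (n + k) ≤
      ((n + k) / (2 ^ k - 1)) * 2 ^ (k - 1) + 2 ^ (k - 1) := by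
    apply csSup_le
    · exact ⟨_, fun _ _ => 0, by simp, rfl⟩
    · rintro d ⟨A, _, rfl⟩
      have h := aux_upper hk A
      apply Nat.le_of_mul_le_mul_left _ hT
      refine h.trans ?_
      have : n + k ≤ (2 ^ k - 1) * ((n + k) / (2 ^ k - 1) + 1) := by
        rw [mul_add, mul_one]; omega
      calc (n + k) * 2 ^ (k - 1)
          ≤ ((2 ^ k - 1) * ((n + k) / (2 ^ k - 1) + 1)) * 2 ^ (k - 1) :=
            Nat.mul_le_mul_right _ this
        _ = _ := by ring
  omega
end

section
/- For all integers k ≥ 2 and m ≥ 1, u((2^k−1)m − k, (2^k−1)m) = ε((2^k−1)m − k, (2^k−1)m) = 2^{k−1}·m, where u and ε denote the maximum stopping distance and maximum distance over all binary matrices of the given dimensions. -/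
/-- existence of a good parity system -/
def GoodSys (r c d : ℕ) : Prop :=
  ∃ (R C : Type) (_ : Fintype R) (_ : Fintype C) (A : R → C → ℕ),
    Fintype.card R = r ∧ Fintype.card C = c ∧ (∀ i j, A i j ≤ 1) ∧
    ∀ s : C → ℕ, (∀ x, s x ≤ 1) → (∃ x, s x = 1) → (∀ i, ∑ x, A i x * s x ≠ 1) →
      d ≤ ∑ x, s x

theorem goodSys_base : GoodSys 0 1 1 := by
  refine ⟨Fin 0, Fin 1, inferInstance, inferInstance, fun _ _ => 0, by simp, by simp, by simp, ?_⟩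
  rintro s _ ⟨x, hx⟩ _
  refine hx.ge.trans ?_
  exact Finset.single_le_sum (f := s) (fun _ _ => Nat.zero_le _) (Finset.mem_univ x)

theorem goodSys_step (r c d : ℕ) (hcd : c + 1 = 2 * d) (h : GoodSys r c d) :
    GoodSys (r + c) (c + c + 1) (2 * d) := by
  classical
  obtain ⟨R, C, _, _, A, hR, hC, hA, hs⟩ := h
  refine ⟨R ⊕ C, Option (C ⊕ C), inferInstance, inferInstance,
    fun i x => match i, x with
      | Sum.inl i, some (Sum.inl x) => A i x
      | Sum.inl _, some (Sum.inr _) => 0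
      | Sum.inl _, none => 0
      | Sum.inr y, some (Sum.inl x) => if x = y then 1 else 0
      | Sum.inr y, some (Sum.inr x) => if x = y then 1 else 0
      | Sum.inr _, none => 1, by simp [hR, hC], by simp [hC], ?_, ?_⟩
  · rintro (i | i) (_ | (x | x)) <;> simp [hA] <;> split_ifs <;> simp
  · intro s h1 hne hst
    have hl : ∀ i, ∑ x, A i x * s (some (Sum.inl x)) ≠ 1 := by
      intro i
      have := hst (Sum.inl i)
      simpa [Fintype.sum_option] using this
    have hr : ∀ y, s none + (s (some (Sum.inl y)) + s (some (Sum.inr y))) ≠ 1 := by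
      intro y
      have := hst (Sum.inr y)
      simpa [Fintype.sum_option] using this
    rw [Fintype.sum_option, Fintype.sum_sum_type, ← Finset.sum_add_distrib]
    have h0 := h1 none
    by_cases he : s none = 1
    · have : ∑ _x : C, 1 ≤ ∑ x, (s (some (Sum.inl x)) + s (some (Sum.inr x))) := by
        apply Finset.sum_le_sum
        intro y _
        have := hr y
        omega
      simp only [Finset.sum_const, Finset.card_univ, hC, smul_eq_mul, mul_one] at this
      omega
    · have heq : ∀ y, s (some (Sum.inl y)) = s (some (Sum.inr y)) := by
        intro y
        have := hr y
        have := h1 (some (Sum.inl y))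
        have := h1 (some (Sum.inr y))
        omega
      have hex : ∃ x, s (some (Sum.inl x)) = 1 := by
        obtain ⟨(_ | (x | x)), hx⟩ := hne
        · exact absurd hx he
        · exact ⟨x, hx⟩
        · exact ⟨x, by rw [heq, hx]⟩
      have := hs (fun x => s (some (Sum.inl x))) (fun x => h1 _) hex hl
      simp only [← heq, ← two_mul, ← Finset.mul_sum]
      omega

theorem goodSys_simplex (k : ℕ) : GoodSys (2 ^ (k + 1) - 1 - (k + 1)) (2 ^ (k + 1) - 1) (2 ^ k) := by
  induction k with
  | zero => simpa using goodSys_base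
  | succ k ih =>
    have h1 : k + 1 < 2 ^ (k + 1) := Nat.lt_two_pow_self
    have h2 : 2 ^ (k + 1) = 2 * 2 ^ k := by ring
    have h3 : 2 ^ (k + 1 + 1) = 2 * 2 ^ (k + 1) := by ring
    have := goodSys_step _ _ _ (by omega) ih
    convert this using 1 <;> omega

theorem goodSys_rep (r c d p : ℕ) (h : GoodSys r c d) :
    GoodSys (r + c * p) (c * (p + 1)) (d * (p + 1)) := by
  classical
  obtain ⟨R, C, _, _, A, hR, hC, hA, hs⟩ := h
  refine ⟨R ⊕ C × Fin p, C × Fin (p + 1), inferInstance, inferInstance,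
    fun i x => match i with
      | Sum.inl i => if x.2 = 0 then A i x.1 else 0
      | Sum.inr y => if x.1 = y.1 then
          ((if x.2 = 0 then 1 else 0) + (if x.2 = y.2.succ then 1 else 0)) else 0,
        by simp [hR, hC], by simp [hC], ?_, ?_⟩
  · rintro (i | ⟨y, j⟩) ⟨x, l⟩
    · simp; split_ifs <;> simp [hA]
    · simp
      split_ifs with h1 h2 h3 <;> simp
      rw [h2] at h3
      exact absurd h3.symm (Fin.succ_ne_zero j)
  · intro s h1 hne hst
    have hl : ∀ i, ∑ x, A i x * s (x, 0) ≠ 1 := by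
      intro i
      have := hst (Sum.inl i)
      simpa [Fintype.sum_prod_type] using this
    have hr : ∀ y j, s (y, 0) + s (y, Fin.succ j) ≠ 1 := by
      intro y j
      have := hst (Sum.inr (y, j))
      simpa [Fintype.sum_prod_type, add_mul, ite_and, Finset.sum_add_distrib] using this
    have heq : ∀ y l, s (y, l) = s (y, 0) := by
      intro y l
      refine Fin.cases rfl (fun j => ?_) l
      have := hr y j
      have := h1 (y, 0)
      have := h1 (y, j.succ)
      omega
    have hex : ∃ x, s (x, 0) = 1 := by
      obtain ⟨⟨x, l⟩, hx⟩ := hne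
      exact ⟨x, by rw [← heq x l, hx]⟩
    have := hs (fun x => s (x, 0)) (fun x => h1 _) hex hl
    rw [Fintype.sum_prod_type]
    simp only [heq]
    simp only [Finset.sum_const, Finset.card_univ, Fintype.card_fin, smul_eq_mul, ← Finset.mul_sum]
    rw [mul_comm]
    exact Nat.mul_le_mul_left _ this

theorem goodSys_fin (r c d : ℕ) (h : GoodSys r c d) :
    ∃ A : Fin r → Fin c → ℕ, (∀ i j, A i j ≤ 1) ∧
      ∀ S : Finset (Fin c), S.Nonempty → (∀ i, ∑ j ∈ S, A i j ≠ 1) → d ≤ S.card := by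
  classical
  obtain ⟨R, C, _, _, A, hR, hC, hA, hs⟩ := h
  let e := Fintype.equivFinOfCardEq hR
  let f := Fintype.equivFinOfCardEq hC
  refine ⟨fun i j => A (e.symm i) (f.symm j), fun _ _ => hA _ _, ?_⟩
  rintro S ⟨j, hj⟩ hS
  have key := hs (fun x => if f x ∈ S then 1 else 0) (fun x => by split_ifs <;> simp)
    ⟨f.symm j, by simp [hj]⟩ ?_
  · rw [← Equiv.sum_comp f.symm] at key
    simpa using key
  · intro i
    have := hS (e i)
    rw [← Equiv.sum_comp f.symm]
    simpa using this

theorem plotkin_arith (q m N d : ℕ) (hq : 2 ≤ q) (hN : q ≤ N)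
    (h : 2 * (d * (N - 1)) ≤ (q - 1) * m * N) : 2 * d ≤ q * m := by
  obtain ⟨q, rfl⟩ : ∃ q', q = q' + 1 := ⟨q - 1, by omega⟩
  obtain ⟨N, rfl⟩ : ∃ q', N = q' + 1 := ⟨N - 1, by omega⟩
  simp only [Nat.add_sub_cancel] at h
  by_contra hc
  push Not at hc
  have h2 : ((q + 1) * m + 1) * N ≤ 2 * d * N := Nat.mul_le_mul_right _ hc
  have h3 : m * q ≤ m * N := Nat.mul_le_mul_left _ (by omega)
  nlinarith

theorem codeDistance_le (k m : ℕ) (hk : 2 ≤ k) (hm : 1 ≤ m)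
    (A : Fin ((2 ^ k - 1) * m - k) → Fin ((2 ^ k - 1) * m) → ℕ) :
    codeDistance A ≤ 2 ^ (k - 1) * m ∧
    ∃ S : Finset (Fin ((2 ^ k - 1) * m)), S.Nonempty ∧ (∀ i, Even (∑ j ∈ S, A i j)) := by
  classical
  have hkn : k ≤ (2 ^ k - 1) * m := by
    have : k < 2 ^ k := Nat.lt_two_pow_self
    calc k ≤ 2 ^ k - 1 := by omega
      _ ≤ _ := Nat.le_mul_of_pos_right _ hm
  generalize hn : (2 ^ k - 1) * m = n at *
  let f : (Fin n → ZMod 2) →ₗ[ZMod 2] (Fin (n - k) → ZMod 2) :=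
    Matrix.mulVecLin (Matrix.of fun i j => (A i j : ZMod 2))
  let V := LinearMap.ker f
  have hfr := LinearMap.finrank_range_add_finrank_ker f
  have hfr2 := Submodule.finrank_le (LinearMap.range f)
  simp only [Module.finrank_fin_fun] at hfr hfr2
  have hcard : 2 ^ k ≤ Fintype.card V := by
    rw [Module.card_eq_pow_finrank (K := ZMod 2) (V := V), ZMod.card]
    apply Nat.pow_le_pow_right (by norm_num)
    change k ≤ Module.finrank (ZMod 2) (LinearMap.ker f)
    omega
  let supp : (Fin n → ZMod 2) → Finset (Fin n) := fun v => Finset.univ.filter fun j => v j ≠ 0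
  have z2 : ∀ a : ZMod 2, a ≠ 0 → a = 1 := by decide
  have heven : ∀ v : V, ∀ i, Even (∑ j ∈ supp v, A i j) := by
    intro v i
    have hv : f v = 0 := v.2
    have hvi : f v i = 0 := congrFun hv i
    rw [← ZMod.natCast_eq_zero_iff_even, ← hvi]
    simp only [f, Matrix.mulVecLin_apply, Matrix.mulVec, dotProduct, Matrix.of_apply, supp,
      Finset.sum_filter]
    push_cast
    apply Finset.sum_congr rfl
    intro j _
    split_ifs with h
    · rw [z2 _ h]; simp
    · push Not at h; rw [h]; simp
  have hne : ∀ v : V, v ≠ 0 → (supp v).Nonempty := by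
    intro v hv
    by_contra hc
    rw [Finset.not_nonempty_iff_eq_empty] at hc
    apply hv
    ext j
    have : j ∉ supp v := by rw [hc]; simp
    simpa [supp] using this
  have hd : ∀ v : V, v ≠ 0 → codeDistance A ≤ (supp v).card := fun v hv =>
    Nat.sInf_le ⟨supp v, hne v hv, heven v, rfl⟩
  have h4 : 4 ≤ 2 ^ k := by
    calc 4 = 2 ^ 2 := by norm_num
      _ ≤ _ := Nat.pow_le_pow_right (by norm_num) hk
  have hcol : ∀ j, 2 * (Finset.univ.filter fun v : V => v.1 j ≠ 0).card ≤ Fintype.card V := by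
    intro j
    have hsplit := Finset.card_filter_add_card_filter_not (s := (Finset.univ : Finset V))
      (fun v : V => v.1 j ≠ 0)
    rw [Finset.card_univ] at hsplit
    rcases (Finset.univ.filter fun v : V => v.1 j ≠ 0).eq_empty_or_nonempty with h0 | ⟨w, hw⟩
    · rw [h0]; simp
    · have hw1 : w.1 j ≠ 0 := by simpa using hw
      have : (Finset.univ.filter fun v : V => v.1 j ≠ 0).card ≤
          (Finset.univ.filter fun v : V => ¬ v.1 j ≠ 0).card := by
        apply Finset.card_le_card_of_injOn (fun v => v + w)
        · intro v hv
          have hv1 : v.1 j ≠ 0 := by simpa using hv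
          simp only [Finset.coe_filter, Finset.mem_univ, true_and, Set.mem_ofPred_eq, not_not]
          change v.1 j + w.1 j = 0
          rw [z2 _ hv1, z2 _ hw1]
          decide
        · intro a _ b _ hab
          exact add_right_cancel hab
      omega
  have hsum : 2 * (codeDistance A * (Fintype.card V - 1)) ≤ n * Fintype.card V := by
    have e1 : ∑ v : V, (supp v).card = ∑ j, (Finset.univ.filter fun v : V => v.1 j ≠ 0).card := by
      simp only [supp, Finset.card_filter]
      exact Finset.sum_comm
    have e2 : codeDistance A * (Fintype.card V - 1) ≤ ∑ v : V, (supp v).card := by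
      calc codeDistance A * (Fintype.card V - 1)
          = ∑ v ∈ (Finset.univ : Finset V).erase 0, codeDistance A := by
            rw [Finset.sum_const, Finset.card_erase_of_mem (Finset.mem_univ _), Finset.card_univ,
              smul_eq_mul, mul_comm]
        _ ≤ ∑ v ∈ (Finset.univ : Finset V).erase 0, (supp v).card :=
            Finset.sum_le_sum fun v hv => hd v (Finset.ne_of_mem_erase hv)
        _ ≤ _ := Finset.sum_le_sum_of_subset (Finset.erase_subset _ _)
    calc 2 * (codeDistance A * (Fintype.card V - 1))
        ≤ 2 * ∑ j, (Finset.univ.filter fun v : V => v.1 j ≠ 0).card := by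
          rw [← e1]; exact Nat.mul_le_mul_left _ e2
      _ = ∑ j, 2 * (Finset.univ.filter fun v : V => v.1 j ≠ 0).card := Finset.mul_sum _ _ _
      _ ≤ ∑ j : Fin n, Fintype.card V := Finset.sum_le_sum fun j _ => hcol j
      _ = _ := by simp
  constructor
  · have := plotkin_arith (2 ^ k) m _ _ (by omega) hcard (by rw [hn]; exact hsum)
    have h2 : 2 ^ k = 2 * 2 ^ (k - 1) := by
      rw [← pow_succ']; congr 1; omega
    rw [h2, mul_assoc] at this
    exact Nat.le_of_mul_le_mul_left this (by norm_num)
  · have : 1 < Fintype.card V := by omega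
    obtain ⟨v, hv⟩ := Fintype.exists_ne_of_one_lt_card this 0
    exact ⟨supp v, hne v hv, heven v⟩

/-- For all integers `k ≥ 2` and `m ≥ 1`,
`u((2^k−1)m − k, (2^k−1)m) = ε((2^k−1)m − k, (2^k−1)m) = 2^(k−1) * m`. -/
theorem stmt_9 (k m : ℕ) (hk : 2 ≤ k) (hm : 1 ≤ m) :
    maxStoppingDistance ((2 ^ k - 1) * m - k) ((2 ^ k - 1) * m) = 2 ^ (k - 1) * m ∧
    maxCodeDistance ((2 ^ k - 1) * m - k) ((2 ^ k - 1) * m) = 2 ^ (k - 1) * m := by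
  have hub : ∀ A : Fin ((2 ^ k - 1) * m - k) → Fin ((2 ^ k - 1) * m) → ℕ,
      stoppingDistance A ≤ codeDistance A := by
    intro A
    obtain ⟨_, S, hS, hE⟩ := codeDistance_le k m hk hm A
    obtain ⟨T, hT, hTE, hTc⟩ := Nat.sInf_mem (s := {c | ∃ S : Finset (Fin ((2 ^ k - 1) * m)),
      S.Nonempty ∧ (∀ i, Even (∑ j ∈ S, A i j)) ∧ S.card = c}) ⟨_, S, hS, hE, rfl⟩
    refine Nat.sInf_le ⟨T, hT, fun i hi => ?_, hTc⟩
    have := hTE i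
    rw [hi] at this
    exact absurd this (by decide)
  have hub2 := fun A => (codeDistance_le k m hk hm A).1
  obtain ⟨A, hA1, hA⟩ : ∃ A : Fin ((2 ^ k - 1) * m - k) → Fin ((2 ^ k - 1) * m) → ℕ,
      (∀ i j, A i j ≤ 1) ∧ ∀ S : Finset (Fin ((2 ^ k - 1) * m)), S.Nonempty →
        (∀ i, ∑ j ∈ S, A i j ≠ 1) → 2 ^ (k - 1) * m ≤ S.card := by
    apply goodSys_fin
    obtain ⟨l, rfl⟩ : ∃ l, k = l + 1 := ⟨k - 1, by omega⟩
    obtain ⟨p, rfl⟩ : ∃ p, m = p + 1 := ⟨m - 1, by omega⟩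
    have := goodSys_rep _ _ _ p (goodSys_simplex l)
    have h1 : l + 1 < 2 ^ (l + 1) := Nat.lt_two_pow_self
    convert this using 1
    · rw [mul_add, mul_one]
      omega
    · rw [Nat.add_sub_cancel]
  have hlow : 2 ^ (k - 1) * m ≤ stoppingDistance A := by
    obtain ⟨_, S, hS, hE⟩ := codeDistance_le k m hk hm A
    refine le_csInf ⟨S.card, S, hS, fun i hi => ?_, rfl⟩ ?_
    · have := hE i
      rw [hi] at this
      exact absurd this (by decide)
    · rintro c ⟨T, hT, hT1, rfl⟩
      exact hA T hT hT1
  constructor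
  · refine IsGreatest.csSup_eq ⟨⟨A, hA1, ?_⟩, ?_⟩
    · exact le_antisymm ((hub A).trans (hub2 A)) hlow
    · rintro d ⟨B, _, rfl⟩
      exact (hub B).trans (hub2 B)
  · refine IsGreatest.csSup_eq ⟨⟨A, hA1, ?_⟩, ?_⟩
    · exact le_antisymm (hub2 A) (hlow.trans (hub A))
    · rintro d ⟨B, _, rfl⟩
      exact hub2 B
end

section
/- Every 4×8 binary matrix has a nonempty 1-free set of at most 3 columns. -/
def badT (a b c : ℕ) : Bool :=
  a != b && a != c && b != c && ((a ^^^ b ^^^ c) == (a &&& b &&& c))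

def srch : List ℕ → List ℕ → ℕ → Bool
  | [], _, k => k != 0
  | x :: r, ch, k =>
    k != 0 && ((ch.any fun a => ch.any fun b => badT x a b) || srch r (x :: ch) (k - 1)) && srch r ch k

theorem srch_spec (P : ℕ → Bool)
    (hP : ∀ a b c, P a = true → P b = true → P c = true → badT a b c = false) :
    ∀ (r ch : List ℕ) (k : ℕ), srch r ch k = true → (∀ x ∈ ch, P x = true) →
      k ≤ (r.filter P).length → False := by
  intro r
  induction r with
  | nil => intro ch k h _ hk; simp [srch] at h hk; exact h hk
  | cons x r ih =>
    intro ch k h hch hk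
    simp only [srch, Bool.and_eq_true, Bool.or_eq_true, List.any_eq_true] at h
    obtain ⟨⟨h0, h1⟩, h2⟩ := h
    by_cases hx : P x = true
    · rcases h1 with ⟨a, ha, b, hb, hab⟩ | h1
      · have := hP x a b hx (hch a ha) (hch b hb)
        simp [this] at hab
      · refine ih _ _ h1 ?_ ?_
        · intro y hy
          rcases List.mem_cons.1 hy with rfl | hy
          · exact hx
          · exact hch y hy
        · simp [List.filter_cons, hx] at hk; omega
    · refine ih _ _ h2 hch ?_
      simpa [List.filter_cons, hx] using hk

theorem srch_run : srch (List.range' 1 15) [] 8 = true := by decide +kernel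

/-- Every `4 × 8` binary matrix has a nonempty 1-free set of at most `3` columns. -/
theorem stmt_11 (A : Fin 4 → Fin 8 → ℕ) (hA : ∀ i j, A i j ≤ 1) :
    ∃ S : Finset (Fin 8), S.Nonempty ∧ S.card ≤ 3 ∧ ∀ i, ∑ j ∈ S, A i j ≠ 1 := by
  classical
  by_contra hno
  have hS : ∀ S : Finset (Fin 8), S.Nonempty → S.card ≤ 3 → ∃ i, ∑ j ∈ S, A i j = 1 := by
    intro S h1 h2
    by_contra h3
    exact hno ⟨S, h1, h2, fun i hi => h3 ⟨i, hi⟩⟩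
  obtain ⟨f, hf⟩ : ∃ f : Fin 8 → ℕ, ∀ j, f j = A 0 j + 2 * A 1 j + 4 * A 2 j + 8 * A 3 j :=
    ⟨_, fun _ => rfl⟩
  have hbit : ∀ i j, A i j = ((f j).testBit i).toNat := by
    intro i j
    have key : ∀ a < 2, ∀ b < 2, ∀ c < 2, ∀ d < 2, ∀ i : Fin 4,
      (![a, b, c, d] : Fin 4 → ℕ) i = ((a + 2 * b + 4 * c + 8 * d).testBit i).toNat := by decide
    have := key (A 0 j) (by have := hA 0 j; omega) (A 1 j) (by have := hA 1 j; omega)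
      (A 2 j) (by have := hA 2 j; omega) (A 3 j) (by have := hA 3 j; omega) i
    rw [hf, ← this]
    fin_cases i <;> rfl
  have hpos : ∀ j, f j ≠ 0 := by
    intro j hj
    obtain ⟨i, hi⟩ := hS {j} (by simp) (by simp)
    simp [hbit, hj] at hi
  have hlt : ∀ j, f j < 16 := by
    intro j
    have := hA 0 j; have := hA 1 j; have := hA 2 j; have := hA 3 j; have := hf j
    omega
  have hinj : Function.Injective f := by
    intro a b hab
    by_contra hne
    obtain ⟨i, hi⟩ := hS {a, b} (by simp) (by rw [Finset.card_pair hne]; omega)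
    rw [Finset.sum_pair hne, hbit, hbit, hab] at hi
    omega
  refine srch_spec (fun x => decide (∃ j, f j = x)) ?_ _ _ _ srch_run (by simp) ?_
  · intro a b c ha hb hc
    obtain ⟨j, rfl⟩ := of_decide_eq_true ha
    obtain ⟨k, rfl⟩ := of_decide_eq_true hb
    obtain ⟨l, rfl⟩ := of_decide_eq_true hc
    by_contra hbad
    simp only [badT, Bool.not_eq_false, Bool.and_eq_true, bne_iff_ne, beq_iff_eq] at hbad
    obtain ⟨⟨⟨h1, h2⟩, h3⟩, h4⟩ := hbad
    have n1 : j ≠ k := fun h => h1 (by rw [h])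
    have n2 : j ≠ l := fun h => h2 (by rw [h])
    have n3 : k ≠ l := fun h => h3 (by rw [h])
    obtain ⟨i, hi⟩ := hS {j, k, l} (by simp) Finset.card_le_three
    rw [Finset.sum_insert (by simp [n1, n2]), Finset.sum_pair n3, hbit, hbit, hbit] at hi
    have h5 := congrArg (fun n => n.testBit i) h4
    simp only [Nat.testBit_xor, Nat.testBit_and] at h5
    revert hi h5
    generalize (f j).testBit i = x
    generalize (f k).testBit i = y
    generalize (f l).testBit i = z
    revert x y z
    decide
  · have hc : (Finset.univ.image f).card = 8 := by
      rw [Finset.card_image_of_injective _ hinj]; rfl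
    refine le_trans hc.ge (le_trans (Finset.card_le_card ?_) (List.toFinset_card_le _))
    intro x hx
    obtain ⟨j, -, rfl⟩ := Finset.mem_image.1 hx
    have := hpos j
    have := hlt j
    simp only [List.mem_toFinset, List.mem_filter, List.mem_range'_1]
    refine ⟨by omega, ?_⟩
    simp
end

section
/- For every positive integer n, u(n, n+2) = ε(n, n+2) = ⌊(2n+4)/3⌋, where u and ε denote the maximum stopping distance and maximum distance over all binary n×(n+2) matrices. -/
theorem exists_even_set {ι : Type} [Fintype ι] {N : ℕ} (h : Fintype.card ι < N)
    (A : ι → Fin N → ℕ) :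
    ∃ S : Finset (Fin N), S.Nonempty ∧ ∀ i, Even (∑ j ∈ S, A i j) := by
  classical
  let f : (Fin N → ZMod 2) →ₗ[ZMod 2] (ι → ZMod 2) :=
    Matrix.mulVecLin (Matrix.of fun i j => (A i j : ZMod 2))
  have hk : LinearMap.ker f ≠ ⊥ := by
    apply LinearMap.ker_ne_bot_of_finrank_lt
    simpa using h
  obtain ⟨v, hv, hv0⟩ := (Submodule.ne_bot_iff _).1 hk
  refine ⟨Finset.univ.filter fun j => v j ≠ 0, ?_, ?_⟩
  · obtain ⟨j, hj⟩ := Function.ne_iff.1 hv0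
    exact ⟨j, by simpa using hj⟩
  · intro i
    rw [← ZMod.natCast_eq_zero_iff_even]
    have h1 : f v i = 0 := by
      rw [LinearMap.mem_ker.1 hv]; rfl
    have h2 : f v i = ∑ j, (A i j : ZMod 2) * v j := rfl
    rw [h2] at h1
    push_cast
    rw [Finset.sum_filter]
    refine Eq.trans ?_ h1
    refine Finset.sum_congr rfl fun j _ => ?_
    have : ∀ x : ZMod 2, x = 0 ∨ x = 1 := by decide
    rcases this (v j) with hx | hx <;> simp [hx]

theorem exists_small_even {n : ℕ} (A : Fin n → Fin (n + 2) → ℕ) :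
    ∃ S : Finset (Fin (n + 2)), S.Nonempty ∧ (∀ i, Even (∑ j ∈ S, A i j)) ∧
      S.card ≤ (2 * n + 4) / 3 := by
  classical
  obtain ⟨V, ⟨k, hk⟩, hV⟩ := exists_even_set (by simp) A
  obtain ⟨W, hW0, hW⟩ := exists_even_set (ι := Option (Fin n)) (by simp)
    (fun i j => i.elim (if j = k then 1 else 0) (fun i => A i j))
  have hkW : k ∉ W := by
    intro hkW
    have := hW none
    simp [hkW] at this
  have hW' : ∀ i, Even (∑ j ∈ W, A i j) := fun i => hW (some i)
  have key : ∀ g : Fin (n + 2) → ℕ,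
      ∑ j ∈ (V \ W) ∪ (W \ V), g j + 2 * ∑ j ∈ V ∩ W, g j = ∑ j ∈ V, g j + ∑ j ∈ W, g j := by
    intro g
    rw [Finset.sum_union (by
      rw [Finset.disjoint_left]; intro a; simp only [Finset.mem_sdiff]; tauto)]
    have h1 := Finset.sum_inter_add_sum_sdiff V W g
    have h2 := Finset.sum_inter_add_sum_sdiff W V g
    rw [Finset.inter_comm] at h2
    omega
  have hc := key (fun _ => 1)
  simp only [Finset.sum_const, smul_eq_mul, mul_one] at hc
  have hu := Finset.card_union_add_card_inter V W
  have hle : (V ∪ W).card ≤ n + 2 := by simpa using Finset.card_le_univ (V ∪ W)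
  by_cases h1 : V.card ≤ (2 * n + 4) / 3
  · exact ⟨V, ⟨k, hk⟩, hV, h1⟩
  by_cases h2 : W.card ≤ (2 * n + 4) / 3
  · exact ⟨W, hW0, hW', h2⟩
  refine ⟨(V \ W) ∪ (W \ V), ⟨k, by simp [hk, hkW]⟩, ?_, by omega⟩
  intro i
  have h3 := key (A i)
  have h4 := hV i
  have h5 := hW' i
  rw [Nat.even_iff] at *
  omega

/-- The extremal matrix. -/
def exMat (n : ℕ) : Fin n → Fin (n + 2) → ℕ := fun i j =>
  if i.val + 1 < n then (if j.val = i.val ∨ j.val = i.val + 3 then 1 else 0)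
  else (if j.val < 3 then 1 else 0)

theorem exMat_le (n : ℕ) (i j) : exMat n i j ≤ 1 := by
  unfold exMat; split_ifs <;> simp

theorem exMat_free {n : ℕ} (hn : 0 < n) (S : Finset (Fin (n + 2))) (hS : S.Nonempty)
    (h : ∀ i, ∑ j ∈ S, exMat n i j ≠ 1) : (2 * n + 4) / 3 ≤ S.card := by
  classical
  -- a row meeting S in j also meets S in another column
  have step : ∀ i, ∀ j ∈ S, exMat n i j = 1 → ∃ k ∈ S, k ≠ j ∧ exMat n i k = 1 := by
    intro i j hj hij
    by_contra hcon
    push Not at hcon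
    apply h i
    rw [Finset.sum_eq_single_of_mem j hj, hij]
    intro k hk hkj
    have := hcon k hk hkj
    have := exMat_le n i k
    omega
  have up : ∀ j (hj : j + 3 < n + 2), (⟨j, by omega⟩ : Fin (n+2)) ∈ S ↔ (⟨j + 3, hj⟩ : Fin (n+2)) ∈ S := by
    intro j hj
    constructor
    · intro hm
      obtain ⟨k, hk, hne, he⟩ := step ⟨j, by omega⟩ _ hm (by simp [exMat]; omega)
      have hkv : k.val = j + 3 := by
        have : k.val ≠ j := fun e => hne (Fin.ext e)
        simp [exMat] at he
        split_ifs at he <;> omega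
      convert hk
      exact hkv.symm
    · intro hm
      obtain ⟨k, hk, hne, he⟩ := step ⟨j, by omega⟩ _ hm (by simp [exMat]; omega)
      have hkv : k.val = j := by
        have : k.val ≠ j + 3 := fun e => hne (Fin.ext e)
        simp [exMat] at he
        split_ifs at he <;> omega
      convert hk
      exact hkv.symm
  have res : ∀ j (hj : j < n + 2), (⟨j, hj⟩ : Fin (n+2)) ∈ S ↔
      (⟨j % 3, by omega⟩ : Fin (n+2)) ∈ S := by
    intro j
    induction j using Nat.strong_induction_on with
    | _ j ih =>
      intro hj
      by_cases h3 : j < 3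
      · simp [Nat.mod_eq_of_lt h3]
      · obtain ⟨m, rfl⟩ : ∃ m, j = m + 3 := ⟨j - 3, by omega⟩
        rw [← up m hj, ih m (by omega) (by omega)]
        simp
  obtain ⟨j, hj⟩ := hS
  have ha := (res j.val j.isLt).1 hj
  obtain ⟨k, hk, hne, he⟩ := step ⟨n - 1, by omega⟩ _ ha (by
    have e1 : ¬ (n - 1 + 1 < n) := by omega
    have e2 : j.val % 3 < 3 := by omega
    simp [exMat, e1, e2])
  have hk3 : k.val < 3 := by
    simp [exMat] at he
    split_ifs at he <;> omega
  have hne' : k.val ≠ j.val % 3 := fun e => hne (Fin.ext e)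
  have hcompl : Sᶜ.card ≤ (n + 2 + 2) / 3 := by
    rw [← Finset.card_range ((n + 2 + 2) / 3)]
    have hmod : ∀ x ∈ Sᶜ, x.val % 3 ≠ j.val % 3 ∧ x.val % 3 ≠ k.val := by
      intro x hx
      rw [Finset.mem_compl] at hx
      constructor
      · intro e
        apply hx
        rw [show x = ⟨x.val, x.isLt⟩ from rfl, res]
        convert ha
      · intro e
        apply hx
        rw [show x = ⟨x.val, x.isLt⟩ from rfl, res]
        convert hk
    apply Finset.card_le_card_of_injOn (fun x => x.val / 3)
    · intro x _
      have := x.isLt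
      simp
      omega
    · intro x hx y hy hxy
      have h1 := hmod x hx
      have h2 := hmod y hy
      simp only at hxy
      apply Fin.ext
      omega
  have := Finset.card_add_card_compl S
  rw [Fintype.card_fin] at this
  omega

theorem even_ne_one {a : ℕ} (h : Even a) : a ≠ 1 := by
  rintro rfl
  simp at h

theorem stmt_16 (n : ℕ) (hn : 0 < n) :
    maxStoppingDistance n (n + 2) = (2 * n + 4) / 3 ∧
    maxCodeDistance n (n + 2) = (2 * n + 4) / 3 := by
  have hs : ∀ A : Fin n → Fin (n + 2) → ℕ, stoppingDistance A ≤ (2 * n + 4) / 3 := by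
    intro A
    obtain ⟨S, h1, h2, h3⟩ := exists_small_even A
    exact le_trans (Nat.sInf_le ⟨S, h1, fun i => even_ne_one (h2 i), rfl⟩) h3
  have hc : ∀ A : Fin n → Fin (n + 2) → ℕ, codeDistance A ≤ (2 * n + 4) / 3 := by
    intro A
    obtain ⟨S, h1, h2, h3⟩ := exists_small_even A
    exact le_trans (Nat.sInf_le ⟨S, h1, h2, rfl⟩) h3
  obtain ⟨S, h1, h2, h3⟩ := exists_small_even (exMat n)
  constructor
  · apply IsGreatest.csSup_eq
    refine ⟨⟨exMat n, exMat_le n, le_antisymm (hs _) ?_⟩, ?_⟩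
    · refine le_csInf ⟨_, S, h1, fun i => even_ne_one (h2 i), rfl⟩ ?_
      rintro _ ⟨T, hT, hf, rfl⟩
      exact exMat_free hn T hT hf
    · rintro _ ⟨A, _, rfl⟩
      exact hs A
  · apply IsGreatest.csSup_eq
    refine ⟨⟨exMat n, exMat_le n, le_antisymm (hc _) ?_⟩, ?_⟩
    · refine le_csInf ⟨_, S, h1, h2, rfl⟩ ?_
      rintro _ ⟨T, hT, hf, rfl⟩
      exact exMat_free hn T hT fun i => even_ne_one (hf i)
    · rintro _ ⟨A, _, rfl⟩
      exact hc A
end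

section
/- For every positive integer n with n ≢ 6 (mod 7), u(n, n+3) = ε(n, n+3) = ⌊(4n+12)/7⌋, where u and ε denote the maximum stopping distance and maximum distance over all binary n×(n+3) matrices. -/
def baseCol : Fin 7 → ℕ := ![1, 2, 5, 6, 8, 11, 12]

def baseMat (i : ℕ) (t : Fin 7) : ℕ := baseCol t / 2 ^ i % 2

def bigMat (n : ℕ) (i : Fin n) (j : Fin (n + 3)) : ℕ :=
  if i.val < 4 then (if h : j.val < 7 then baseMat i.val ⟨j.val, h⟩ else 0)
  else if j.val = i.val + 3 ∨ j.val + 4 = i.val then 1 else 0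

theorem bigMat_le (n : ℕ) (i : Fin n) (j : Fin (n + 3)) : bigMat n i j ≤ 1 := by
  unfold bigMat baseMat
  split_ifs <;> omega

set_option maxRecDepth 100000 in
theorem base_fact : ∀ T : Finset (Fin 7), T.Nonempty →
    (∀ i : Fin 4, ∑ t ∈ T, baseMat i.val t ≠ 1) →
    4 ≤ T.card ∧ ∀ r : Fin 7, r.val ≠ 2 →
      4 + 4 * r.val / 7 ≤ T.card + (T.filter (fun t => t < r)).card := by
  decide +kernel

theorem ker_exists (n : ℕ) (A : Fin n → Fin (n + 3) → ℕ) :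
    ∃ S : Finset (Fin (n + 3)), S.Nonempty ∧ (∀ i, Even (∑ j ∈ S, A i j)) ∧
      7 * S.card ≤ 4 * (n + 3) := by
  classical
  let f : (Fin (n + 3) → ZMod 2) →+ (Fin n → ZMod 2) :=
    { toFun := fun v i => ∑ j, (A i j : ZMod 2) * v j
      map_zero' := by ext i; simp
      map_add' := by intro v w; ext i; simp [mul_add, Finset.sum_add_distrib] }
  let K : Finset (Fin (n + 3) → ZMod 2) := Finset.univ.filter (fun v => f v = 0)
  have hK0 : (0 : Fin (n + 3) → ZMod 2) ∈ K := by simp [K]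
  have hK : 8 ≤ K.card := by
    have h1 : (Finset.univ : Finset (Fin (n + 3) → ZMod 2)).card
        ≤ K.card * (Finset.univ : Finset (Fin n → ZMod 2)).card := by
      refine Finset.card_le_mul_card_image_of_maps_to (f := f) (fun _ _ => Finset.mem_univ _) _ ?_
      intro b _
      by_cases hb : ∃ a, f a = b
      · obtain ⟨a, ha⟩ := hb
        refine Finset.card_le_card_of_injOn (fun v => v - a) ?_ ?_
        · intro v hv
          simp at hv
          simp [K, hv, ha]
        · intro v _ w _ h
          simpa using h
      · rw [Finset.filter_eq_empty_iff.2]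
        · simp
        · intro x _ hx
          exact hb ⟨x, hx⟩
    simp only [Finset.card_univ, Fintype.card_fun, ZMod.card, Fintype.card_fin] at h1
    rw [pow_add, mul_comm] at h1
    simpa using h1
  let sp : (Fin (n + 3) → ZMod 2) → Finset (Fin (n + 3)) :=
    fun v => Finset.univ.filter (fun j => v j = 1)
  by_contra hcon
  push Not at hcon
  have hw : ∀ v ∈ K.erase 0, 4 * (n + 3) + 1 ≤ 7 * (sp v).card := by
    intro v hv
    have hv0 := Finset.ne_of_mem_erase hv
    have hvK := Finset.mem_of_mem_erase hv
    simp only [K, Finset.mem_filter, Finset.mem_univ, true_and] at hvK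
    apply hcon
    · obtain ⟨j, hj⟩ := Function.ne_iff.1 hv0
      refine ⟨j, ?_⟩
      simp only [sp, Finset.mem_filter, Finset.mem_univ, true_and]
      have : ∀ x : ZMod 2, x ≠ 0 → x = 1 := by decide
      exact this _ hj
    · intro i
      have h := congrFun hvK i
      rw [even_iff_two_dvd, ← ZMod.natCast_eq_zero_iff]
      push_cast
      rw [← show f v i = 0 from h]
      simp only [sp, Finset.sum_filter]
      refine Finset.sum_congr rfl fun j _ => ?_
      have : ∀ x y : ZMod 2, (if x = 1 then y else 0) = y * x := by decide
      exact this _ _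
  have hsum := Finset.sum_le_sum hw
  have hcol : ∀ j : Fin (n + 3), 2 * (K.filter (fun v => v j = 1)).card ≤ K.card := by
    intro j
    by_cases hj : ∃ w ∈ K, w j = 1
    · obtain ⟨w, hwK, hwj⟩ := hj
      have h2 : (K.filter (fun v => v j = 1)).card ≤ (K.filter (fun v => ¬ v j = 1)).card := by
        refine Finset.card_le_card_of_injOn (fun v => v + w) ?_ ?_
        · intro v hv
          simp [K] at hv hwK
          simp [K, hv, hwK, hwj]
        · intro v _ u _ h
          simpa using h
      have := Finset.card_filter_add_card_filter_not (s := K) (fun v => v j = 1)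
      omega
    · rw [Finset.filter_eq_empty_iff.2]
      · simp
      · intro x hx h
        exact hj ⟨x, hx, h⟩
  have hdc : ∑ v ∈ K.erase 0, (sp v).card ≤ ∑ j, (K.filter (fun v => v j = 1)).card := by
    calc ∑ v ∈ K.erase 0, (sp v).card ≤ ∑ v ∈ K, (sp v).card :=
          Finset.sum_le_sum_of_subset (Finset.erase_subset _ _)
      _ = _ := by
          simp only [sp, Finset.card_filter]
          exact Finset.sum_comm
  have hcs : 2 * ∑ j, (K.filter (fun v => v j = 1)).card ≤ (n + 3) * K.card := by
    rw [Finset.mul_sum]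
    calc _ ≤ ∑ _j : Fin (n + 3), K.card := Finset.sum_le_sum fun j _ => hcol j
      _ = _ := by simp
  rw [← Finset.mul_sum, Finset.sum_const, Finset.card_erase_of_mem hK0, smul_eq_mul] at hsum
  obtain ⟨k, hk⟩ := Nat.exists_eq_add_of_le hK
  rw [hk] at hsum hcs
  have e : 8 + k - 1 = 7 + k := by omega
  rw [e] at hsum
  nlinarith

theorem code_le (n : ℕ) (A : Fin n → Fin (n + 3) → ℕ) :
    codeDistance A ≤ (4 * n + 12) / 7 := by
  obtain ⟨S, h1, h2, h3⟩ := ker_exists n A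
  have : codeDistance A ≤ S.card := Nat.sInf_le ⟨S, h1, h2, rfl⟩
  omega

theorem stop_le_code (n : ℕ) (A : Fin n → Fin (n + 3) → ℕ) :
    stoppingDistance A ≤ codeDistance A := by
  obtain ⟨S, h1, h2, h3⟩ := ker_exists n A
  obtain ⟨T, t1, t2, t3⟩ := Nat.sInf_mem (s := {c | ∃ S : Finset (Fin (n + 3)), S.Nonempty ∧
    (∀ i, Even (∑ j ∈ S, A i j)) ∧ S.card = c}) ⟨_, S, h1, h2, rfl⟩
  refine Nat.sInf_le ⟨T, t1, ?_, t3⟩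
  intro i h
  have := t2 i
  rw [h] at this
  exact absurd this (by decide)

theorem le_stop (n d : ℕ) (A : Fin n → Fin (n + 3) → ℕ)
    (h : ∀ S : Finset (Fin (n + 3)), S.Nonempty → (∀ i, ∑ j ∈ S, A i j ≠ 1) → d ≤ S.card) :
    d ≤ stoppingDistance A := by
  obtain ⟨S, h1, h2, h3⟩ := ker_exists n A
  refine le_csInf ⟨_, S, h1, ?_, rfl⟩ ?_
  · intro i hi
    have := h2 i
    rw [hi] at this
    exact absurd this (by decide)
  · rintro c ⟨T, t1, t2, rfl⟩
    exact h T t1 t2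

theorem big_case (n : ℕ) (hn : 4 ≤ n) (hmod : n % 7 ≠ 6) (S : Finset (Fin (n + 3)))
    (hS : S.Nonempty) (hf : ∀ i, ∑ j ∈ S, bigMat n i j ≠ 1) : (4 * n + 12) / 7 ≤ S.card := by
  classical
  have hstep : ∀ j (h : j + 7 < n + 3),
      ((⟨j + 7, h⟩ : Fin (n + 3)) ∈ S ↔ (⟨j, by omega⟩ : Fin (n + 3)) ∈ S) := by
    intro j h
    have hrow := hf ⟨j + 4, by omega⟩
    have key : ∀ a b : Fin (n + 3), a ∈ S → b ∉ S →
        (a.val = j + 7 ∧ b.val = j ∨ a.val = j ∧ b.val = j + 7) → False := by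
      intro a b ha hb hab
      apply hrow
      rw [Finset.sum_eq_single a]
      · simp only [bigMat]
        rw [if_neg (by omega), if_pos (by omega)]
      · intro c hc hca
        have hcb : c ≠ b := fun e => hb (e ▸ hc)
        have h1 : c.val ≠ a.val := fun e => hca (Fin.ext e)
        have h2 : c.val ≠ b.val := fun e => hcb (Fin.ext e)
        simp only [bigMat]
        rw [if_neg (by omega), if_neg (by omega)]
      · exact fun h => absurd ha h
    constructor
    · intro ha
      by_contra hb
      exact key _ _ ha hb (Or.inl ⟨rfl, rfl⟩)
    · intro ha
      by_contra hb
      exact key _ _ ha hb (Or.inr ⟨rfl, rfl⟩)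
  have hall : ∀ q t (h : 7 * q + t < n + 3),
      ((⟨7 * q + t, h⟩ : Fin (n + 3)) ∈ S ↔ (⟨t, by omega⟩ : Fin (n + 3)) ∈ S) := by
    intro q t
    induction q with
    | zero => intro h; simp
    | succ q ih =>
      intro h
      rw [← ih (by omega), ← hstep (7 * q + t) (by omega)]
      have : 7 * (q + 1) + t = 7 * q + t + 7 := by ring
      simp only [this]
  let emb : Fin 7 ↪ Fin (n + 3) := Fin.castLEEmb (by omega)
  let T : Finset (Fin 7) := Finset.univ.filter (fun t => emb t ∈ S)
  have hT : T.Nonempty := by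
    obtain ⟨j, hj⟩ := hS
    refine ⟨⟨j.val % 7, Nat.mod_lt _ (by norm_num)⟩, ?_⟩
    simp only [T, Finset.mem_filter, Finset.mem_univ, true_and]
    have h := hall (j.val / 7) (j.val % 7) (by have := j.2; omega)
    refine h.1 ?_
    convert hj using 1
    apply Fin.ext
    simp
    omega
  have hTf : ∀ i : Fin 4, ∑ t ∈ T, baseMat i.val t ≠ 1 := by
    intro i
    have h := hf ⟨i.val, by omega⟩
    have e : ∑ t ∈ T, baseMat i.val t = ∑ j ∈ S, bigMat n ⟨i.val, by omega⟩ j := by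
      have e1 : ∑ t ∈ T, baseMat i.val t = ∑ j ∈ T.map emb, bigMat n ⟨i.val, by omega⟩ j := by
        rw [Finset.sum_map]
        refine Finset.sum_congr rfl fun t _ => ?_
        simp [bigMat, emb]
      rw [e1]
      refine Finset.sum_subset ?_ ?_
      · intro j hj
        simp only [T, Finset.mem_map, Finset.mem_filter, Finset.mem_univ, true_and] at hj
        obtain ⟨t, ht, rfl⟩ := hj
        exact ht
      · intro j hj hjT
        have : ¬ j.val < 7 := by
          intro h7
          apply hjT
          rw [Finset.mem_map]
          refine ⟨⟨j.val, h7⟩, ?_, rfl⟩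
          simp only [T, Finset.mem_filter, Finset.mem_univ, true_and]
          exact hj
        simp [bigMat, this]
    rw [e]
    exact h
  have hcard : ∑ t ∈ T, (n + 9 - t.val) / 7 ≤ S.card := by
    have e : ∑ t ∈ T, (n + 9 - t.val) / 7
        = (T.sigma (fun t => Finset.range ((n + 9 - t.val) / 7))).card := by
      rw [Finset.card_sigma]; simp
    rw [e]
    refine Finset.card_le_card_of_injOn
      (fun x => Fin.ofNat (n + 3) (7 * x.2 + x.1.val)) ?_ ?_
    · rintro ⟨t, q⟩ hx
      simp only [Finset.coe_sigma, Set.mem_sigma_iff, Finset.mem_coe, Finset.mem_range] at hx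
      obtain ⟨ht, hq⟩ := hx
      simp only [T, Finset.mem_filter, Finset.mem_univ, true_and] at ht
      have hlt : 7 * q + t.val < n + 3 := by omega
      have h := (hall q t.val hlt).2 ht
      have : Fin.ofNat (n + 3) (7 * q + t.val) = ⟨7 * q + t.val, hlt⟩ :=
        Fin.ext (Nat.mod_eq_of_lt hlt)
      simp only [this]
      exact h
    · rintro ⟨t, q⟩ hx ⟨t', q'⟩ hx' h
      simp only [Finset.coe_sigma, Set.mem_sigma_iff, Finset.mem_coe, Finset.mem_range] at hx hx'
      have h1 : 7 * q + t.val < n + 3 := by omega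
      have h2 : 7 * q' + t'.val < n + 3 := by omega
      have h3 := congrArg Fin.val h
      simp only [Fin.val_ofNat, Nat.mod_eq_of_lt h1, Nat.mod_eq_of_lt h2] at h3
      have h4 : t = t' := Fin.ext (by omega)
      have h5 : q = q' := by omega
      subst h4 h5
      rfl
  obtain ⟨hb1, hb2⟩ := base_fact T hT hTf
  have hb3 := hb2 ⟨(n + 3) % 7, Nat.mod_lt _ (by norm_num)⟩ (by simp only; omega)
  have hs : ∑ t ∈ T, (n + 9 - t.val) / 7 = T.card * ((n + 3) / 7) +
      (T.filter (fun t => t < (⟨(n + 3) % 7, Nat.mod_lt _ (by norm_num)⟩ : Fin 7))).card := by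
    rw [Finset.card_filter (fun t => t < _) T, ← smul_eq_mul, ← Finset.sum_const, ← Finset.sum_add_distrib]
    refine Finset.sum_congr rfl fun t _ => ?_
    have := t.2
    simp only [Fin.lt_def]
    split_ifs <;> omega
  rw [hs] at hcard
  simp only at hb3
  obtain ⟨k, hk⟩ : ∃ k, (n + 3) / 7 = k + 1 := ⟨(n + 3) / 7 - 1, by omega⟩
  rw [hk] at hcard
  have h6 : 4 * k ≤ T.card * k := Nat.mul_le_mul_right _ hb1
  rw [mul_add] at hcard
  omega

theorem small_fact (n : ℕ) (hn : 0 < n) (hn4 : n < 4) :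
    ∃ A : Fin n → Fin (n + 3) → ℕ, (∀ i j, A i j ≤ 1) ∧
    ∀ S : Finset (Fin (n + 3)), S.Nonempty → (∀ i, ∑ j ∈ S, A i j ≠ 1) →
      (4 * n + 12) / 7 ≤ S.card := by
  interval_cases n
  · exact ⟨fun _ _ => 1, by decide +kernel, by decide +kernel⟩
  · exact ⟨fun _ _ => 1, by decide +kernel, by decide +kernel⟩
  · exact ⟨fun i j => (j.val + 1) / 2 ^ i.val % 2, by decide +kernel, by decide +kernel⟩

theorem exists_mat (n : ℕ) (hn : 0 < n) (hmod : n % 7 ≠ 6) :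
    ∃ A : Fin n → Fin (n + 3) → ℕ, (∀ i j, A i j ≤ 1) ∧
      (4 * n + 12) / 7 ≤ stoppingDistance A := by
  by_cases h : n < 4
  · obtain ⟨A, h1, h2⟩ := small_fact n hn h
    exact ⟨A, h1, le_stop _ _ _ h2⟩
  · exact ⟨bigMat n, bigMat_le n, le_stop _ _ _ (big_case n (by omega) hmod)⟩

/-- For every positive integer `n` with `n ≢ 6 (mod 7)`,
`u(n, n+3) = ε(n, n+3) = ⌊(4n+12)/7⌋`. -/
theorem stmt_17 (n : ℕ) (hn : 0 < n) (hmod : n % 7 ≠ 6) :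
    maxStoppingDistance n (n + 3) = (4 * n + 12) / 7 ∧
    maxCodeDistance n (n + 3) = (4 * n + 12) / 7 := by
  obtain ⟨A, hA, hd⟩ := exists_mat n hn hmod
  have h1 := stop_le_code n A
  have h2 := code_le n A
  constructor
  · refine IsGreatest.csSup_eq ⟨⟨A, hA, by omega⟩, ?_⟩
    rintro d ⟨B, _, rfl⟩
    exact (stop_le_code n B).trans (code_le n B)
  · refine IsGreatest.csSup_eq ⟨⟨A, hA, by omega⟩, ?_⟩
    rintro d ⟨B, _, rfl⟩
    exact code_le n B
end

section
/- For every positive integer m, every binary (7m−1)×(7m+2) matrix has a nonempty even set of at most 4m columns; consequently ε(7m−1, 7m+2) ≤ 4m, which is strictly smaller than ⌊(4(7m−1)+12)/7⌋ = 4m+1. -/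
theorem even_set_aux (m : ℕ) (hm : 0 < m)
    (A : Fin (7 * m - 1) → Fin (7 * m + 2) → ℕ) :
      ∃ S : Finset (Fin (7 * m + 2)), S.Nonempty ∧
        (∀ i, Even (∑ j ∈ S, A i j)) ∧ S.card ≤ 4 * m := by
  classical
  by_contra! hcon
  let M : Matrix (Fin (7 * m - 1)) (Fin (7 * m + 2)) (ZMod 2) := fun i j => (A i j : ZMod 2)
  let f := Matrix.mulVecLin M
  let w : (Fin (7 * m + 2) → ZMod 2) → ℕ := fun v => ∑ j, (v j).val
  have hz : ∀ x : ZMod 2, x.val = if x ≠ 0 then 1 else 0 := by decide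
  have hz2 : ∀ x : ZMod 2, x = if x ≠ 0 then 1 else 0 := by decide
  have hw : ∀ v ∈ LinearMap.ker f, v ≠ 0 → 4 * m + 1 ≤ w v := by
    intro v hv hv0
    have h := hcon (Finset.univ.filter fun j => v j ≠ 0) ?_ ?_
    · have : w v = (Finset.univ.filter fun j => v j ≠ 0).card := by
        simp only [w]
        rw [Finset.card_filter]
        exact Finset.sum_congr rfl fun j _ => hz _
      omega
    · obtain ⟨j, hj⟩ := Function.ne_iff.mp hv0
      exact ⟨j, by simpa using hj⟩
    · intro i
      rw [← ZMod.natCast_eq_zero_iff_even]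
      have h1 : (M.mulVec v) i = 0 := by
        have : f v = 0 := hv
        exact congrFun this i
      refine Eq.trans ?_ h1
      rw [Nat.cast_sum, Finset.sum_filter]
      simp only [Matrix.mulVec, dotProduct, M]
      refine Finset.sum_congr rfl fun j _ => ?_
      conv_rhs => rw [hz2 (v j)]
      split_ifs <;> simp
  have hdim : 3 ≤ Module.finrank (ZMod 2) (LinearMap.ker f) := by
    have h1 := LinearMap.finrank_range_add_finrank_ker f
    have h2 := Submodule.finrank_le (LinearMap.range f)
    simp only [Module.finrank_fin_fun] at h1 h2
    omega
  let b := Module.finBasis (ZMod 2) (LinearMap.ker f)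
  have hli : LinearIndependent (ZMod 2) (fun i : Fin 3 => b (Fin.castLE hdim i)) :=
    b.linearIndependent.comp _ (Fin.castLE_injective hdim)
  rw [Fintype.linearIndependent_iff] at hli
  obtain ⟨x, hx⟩ : ∃ x, x = b (Fin.castLE hdim 0) := ⟨_, rfl⟩
  obtain ⟨y, hy⟩ : ∃ y, y = b (Fin.castLE hdim 1) := ⟨_, rfl⟩
  obtain ⟨z, hzz⟩ : ∃ z, z = b (Fin.castLE hdim 2) := ⟨_, rfl⟩
  have key : ∀ p q r : ZMod 2, (p ≠ 0 ∨ q ≠ 0 ∨ r ≠ 0) →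
      4 * m + 1 ≤ w (p • (x : Fin (7 * m + 2) → ZMod 2) + q • (y : Fin (7 * m + 2) → ZMod 2)
        + r • (z : Fin (7 * m + 2) → ZMod 2)) := by
    intro p q r hpqr
    refine hw _ (p • x + q • y + r • z).2 ?_
    intro h0
    have h0' : p • x + q • y + r • z = 0 := Subtype.ext h0
    have h := hli ![p, q, r] (by simpa [Fin.sum_univ_three, ← hx, ← hy, ← hzz] using h0')
    have a0 := h 0
    have a1 := h 1
    have a2 := h 2
    simp at a0 a1 a2
    tauto
  have hadd : ∀ u v, ∃ k, w (u + v) + 2 * k = w u + w v := by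
    intro u v
    refine ⟨∑ j, (u j * v j).val, ?_⟩
    simp only [w]
    rw [Finset.mul_sum, ← Finset.sum_add_distrib, ← Finset.sum_add_distrib]
    refine Finset.sum_congr rfl fun j _ => ?_
    have : ∀ s t : ZMod 2, (s + t).val + 2 * (s * t).val = s.val + t.val := by decide
    exact this _ _
  have hsum : ∀ u v t, w u + w v + w t + w (u + v) + w (u + t) + w (v + t) + w (u + v + t)
      ≤ 4 * (7 * m + 2) := by
    intro u v t
    simp only [w]
    simp only [← Finset.sum_add_distrib]
    refine (Finset.sum_le_card_nsmul _ _ 4 ?_).trans (by simp; omega)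
    intro j _
    have : ∀ a b c : ZMod 2, a.val + b.val + c.val + (a + b).val + (a + c).val + (b + c).val
      + (a + b + c).val ≤ 4 := by decide
    exact this _ _ _
  have k1 := key 1 0 0 (by simp)
  have k2 := key 0 1 0 (by simp)
  have k3 := key 0 0 1 (by simp)
  have k4 := key 1 1 0 (by simp)
  have k5 := key 1 0 1 (by simp)
  have k6 := key 0 1 1 (by simp)
  have k7 := key 1 1 1 (by simp)
  simp only [one_smul, zero_smul, add_zero, zero_add] at k1 k2 k3 k4 k5 k6 k7
  have s := hsum x y z
  obtain ⟨c1, e1⟩ := hadd x y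
  obtain ⟨c2, e2⟩ := hadd x z
  obtain ⟨c3, e3⟩ := hadd y z
  obtain ⟨c4, e4⟩ := hadd (x + y) z
  omega

/-- For every positive integer `m`, every binary `(7m−1) × (7m+2)` matrix has a nonempty
even set of at most `4m` columns; consequently `ε(7m−1, 7m+2) ≤ 4m`, which is strictly
smaller than `⌊(4(7m−1)+12)/7⌋ = 4m+1`. -/
theorem stmt_18 (m : ℕ) (hm : 0 < m) :
    (∀ A : Fin (7 * m - 1) → Fin (7 * m + 2) → ℕ, (∀ i j, A i j ≤ 1) →
      ∃ S : Finset (Fin (7 * m + 2)), S.Nonempty ∧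
        (∀ i, Even (∑ j ∈ S, A i j)) ∧ S.card ≤ 4 * m) ∧
    maxCodeDistance (7 * m - 1) (7 * m + 2) ≤ 4 * m ∧
    4 * m < (4 * (7 * m - 1) + 12) / 7 := by
  refine ⟨fun A _ => even_set_aux m hm A, ?_, by omega⟩
  refine csSup_le' ?_
  rintro d ⟨A, -, rfl⟩
  obtain ⟨S, h1, h2, h3⟩ := even_set_aux m hm A
  have h4 : codeDistance A ≤ S.card := Nat.sInf_le ⟨S, h1, h2, rfl⟩
  exact h4.trans h3
end

section
/- Let A be an m×n binary matrix whose i-th row has exactly one 1-entry, located in column j, and let B be the (m−1)×(n−1) matrix obtained from A by deleting row i and column j. Then a nonempty set S of columns of A is 1-free (respectively, even) if and only if S does not contain column j and the corresponding set of columns of B is 1-free (respectively, even). Consequently, the minimum cardinality of a nonempty 1-free set of columns of A equals that of B, and likewise for nonempty even sets, whenever these minima exist. -/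
theorem aux_iff (P : ℕ → Prop) (h0 : P 0) (h1 : ¬ P 1) (m n : ℕ)
    (A : Fin (m + 1) → Fin (n + 1) → ℕ)
    (i : Fin (m + 1)) (j : Fin (n + 1))
    (hij : A i j = 1) (hrow : ∀ c, c ≠ j → A i c = 0)
    (B : Fin m → Fin n → ℕ)
    (hB : ∀ r c, B r c = A (i.succAbove r) (j.succAbove c)) (S : Finset (Fin (n + 1))) :
    (∀ r, P (∑ c ∈ S, A r c)) ↔
      j ∉ S ∧ ∀ r, P (∑ c ∈ S.preimage j.succAbove Fin.succAbove_right_injective.injOn,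
            B r c) := by
  have hi : ∑ c ∈ S, A i c = if j ∈ S then 1 else 0 := by
    rw [← Finset.sum_ite_eq' S j (fun _ => 1)]
    refine Finset.sum_congr rfl fun c _ => ?_
    by_cases h : c = j
    · simp [h, hij]
    · simp [h, hrow c h]
  have hr : j ∉ S → ∀ r, ∑ c ∈ S.preimage j.succAbove Fin.succAbove_right_injective.injOn,
            B r c = ∑ c ∈ S, A (i.succAbove r) c := by
    intro hj r
    simp only [hB]
    refine Finset.sum_preimage j.succAbove S _ (fun c => A (i.succAbove r) c) ?_
    intro x hx hx'
    exfalso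
    apply hx'
    rw [Fin.range_succAbove]
    rintro rfl
    exact hj hx
  constructor
  · intro h
    have hj : j ∉ S := by
      intro hj
      have := h i
      rw [hi, if_pos hj] at this
      exact h1 this
    refine ⟨hj, fun r => ?_⟩
    rw [hr hj]
    exact h _
  · rintro ⟨hj, h⟩ r
    rcases Fin.eq_self_or_eq_succAbove i r with rfl | ⟨r, rfl⟩
    · rw [hi, if_neg hj]; exact h0
    · rw [← hr hj]; exact h r

theorem aux_set (P : ℕ → Prop) (h0 : P 0) (h1 : ¬ P 1) (m n : ℕ)
    (A : Fin (m + 1) → Fin (n + 1) → ℕ)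
    (i : Fin (m + 1)) (j : Fin (n + 1))
    (hij : A i j = 1) (hrow : ∀ c, c ≠ j → A i c = 0)
    (B : Fin m → Fin n → ℕ)
    (hB : ∀ r c, B r c = A (i.succAbove r) (j.succAbove c)) :
    {c | ∃ S : Finset (Fin (n + 1)), S.Nonempty ∧ (∀ r, P (∑ x ∈ S, A r x)) ∧ S.card = c} =
      {c | ∃ S : Finset (Fin n), S.Nonempty ∧ (∀ r, P (∑ x ∈ S, B r x)) ∧ S.card = c} := by
  have key := aux_iff P h0 h1 m n A i j hij hrow B hB
  have hpre : ∀ T : Finset (Fin n), (T.map j.succAboveEmb).preimage j.succAbove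
      Fin.succAbove_right_injective.injOn = T := by
    intro T; ext x; simp
  have hjm : ∀ T : Finset (Fin n), j ∉ T.map j.succAboveEmb := by
    intro T; simp [Fin.succAbove_ne]
  ext c
  constructor
  · rintro ⟨S, hS, hP, rfl⟩
    obtain ⟨hj, h⟩ := (key S).1 hP
    have hm : (S.preimage j.succAbove Fin.succAbove_right_injective.injOn).map
        j.succAboveEmb = S := by
      ext x
      rcases Fin.eq_self_or_eq_succAbove j x with rfl | ⟨x, rfl⟩
      · simp [hj, Fin.succAbove_ne]
      · simp
    refine ⟨_, ?_, h, ?_⟩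
    · rw [← hm] at hS
      exact Finset.map_nonempty.1 hS
    · rw [← Finset.card_map j.succAboveEmb, hm]
  · rintro ⟨T, hT, hP, rfl⟩
    refine ⟨T.map j.succAboveEmb, hT.map, (key _).2 ⟨hjm T, ?_⟩, by simp⟩
    rw [hpre]
    exact hP

/-- Let `A` be an `(m+1) × (n+1)` binary matrix whose row `i` has exactly one 1-entry,
located in column `j`, and let `B` be the `m × n` matrix obtained from `A` by deleting
row `i` and column `j`.  Then a nonempty set `S` of columns of `A` is 1-free
(resp. even) iff `j ∉ S` and the corresponding set of columns of `B` is 1-free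
(resp. even).  Consequently the minimum cardinality of a nonempty 1-free set of columns
of `A` equals that of `B`, and likewise for even sets. -/
theorem stmt_19 (m n : ℕ) (A : Fin (m + 1) → Fin (n + 1) → ℕ)
    (hbin : ∀ r c, A r c ≤ 1)
    (i : Fin (m + 1)) (j : Fin (n + 1))
    (hij : A i j = 1) (hrow : ∀ c, c ≠ j → A i c = 0)
    (B : Fin m → Fin n → ℕ)
    (hB : ∀ r c, B r c = A (i.succAbove r) (j.succAbove c)) :
    (∀ S : Finset (Fin (n + 1)), S.Nonempty →
      (((∀ r, ∑ c ∈ S, A r c ≠ 1) ↔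
          j ∉ S ∧ ∀ r, ∑ c ∈ S.preimage j.succAbove Fin.succAbove_right_injective.injOn,
            B r c ≠ 1) ∧
        ((∀ r, Even (∑ c ∈ S, A r c)) ↔
          j ∉ S ∧ ∀ r, Even (∑ c ∈ S.preimage j.succAbove Fin.succAbove_right_injective.injOn,
            B r c)))) ∧
    sInf {c | ∃ S : Finset (Fin (n + 1)), S.Nonempty ∧ (∀ r, ∑ x ∈ S, A r x ≠ 1) ∧ S.card = c} =
      sInf {c | ∃ S : Finset (Fin n), S.Nonempty ∧ (∀ r, ∑ x ∈ S, B r x ≠ 1) ∧ S.card = c} ∧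
    sInf {c | ∃ S : Finset (Fin (n + 1)), S.Nonempty ∧ (∀ r, Even (∑ x ∈ S, A r x)) ∧ S.card = c} =
      sInf {c | ∃ S : Finset (Fin n), S.Nonempty ∧ (∀ r, Even (∑ x ∈ S, B r x)) ∧ S.card = c} := by
  exact ⟨fun S _ => ⟨aux_iff (fun k => k ≠ 1) (by simp) (by simp) m n A i j hij hrow B hB S,
      aux_iff Even (by simp) (by simp) m n A i j hij hrow B hB S⟩,
    congrArg sInf (aux_set (fun k => k ≠ 1) (by simp) (by simp) m n A i j hij hrow B hB),
    congrArg sInf (aux_set Even (by simp) (by simp) m n A i j hij hrow B hB)⟩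
end
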